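/- Let d ≥ 1 and α ∈ (0,1). There exists C > 0 depending only on d and α such that for every S : ℝ × ℝ^d × ℝ^d → ℝ with [S]_{C_ℓ^α} < ∞, every function g : ℝ × ℝ^d × ℝ^d → ℝ which is C¹ in (t,x), C² in v, satisfies (∂_t + v·∇_x) g = Δ_v g + S at every point, and has [g]_{C_ℓ^{2+α}} < ∞, obeys [g]_{C_ℓ^{2+α}} ≤ C [S]_{C_ℓ^α}. -/

import Mathlib

open Real MeasureTheory
open scoped BigOperators ENNReal

noncomputable section

abbrev E (d : ℕ) := EuclideanSpace ℝ (Fin d)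
abbrev Z (d : ℕ) := ℝ × E d × E d

variable {d : ℕ}

/-- The kinetic cylinder `Q_r(z₀)`. -/
def kCyl (r : ℝ) (z₀ : Z d) : Set (Z d) :=
  {z | z₀.1 - r ^ 2 < z.1 ∧ z.1 ≤ z₀.1 ∧
    ‖z.2.1 - z₀.2.1 - (z.1 - z₀.1) • z₀.2.2‖ < r ^ 3 ∧ ‖z.2.2 - z₀.2.2‖ < r}

/-- Partial derivative in time. -/
def pt (g : Z d → ℝ) (z : Z d) : ℝ := deriv (fun s => g (s, z.2.1, z.2.2)) z.1

/-- Partial derivative in the direction `x i`. -/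
def px (g : Z d → ℝ) (i : Fin d) (z : Z d) : ℝ :=
  deriv (fun s : ℝ => g (z.1, z.2.1 + s • EuclideanSpace.single i (1 : ℝ), z.2.2)) 0

/-- Partial derivative in the direction `v i`. -/
def pv (g : Z d → ℝ) (i : Fin d) (z : Z d) : ℝ :=
  deriv (fun s : ℝ => g (z.1, z.2.1, z.2.2 + s • EuclideanSpace.single i (1 : ℝ))) 0

/-- Second partial derivative in `v i`, `v j`. -/
def pvv (g : Z d → ℝ) (i j : Fin d) : Z d → ℝ := pv (pv g j) i

/-- Transport derivative `∂_t g + v ⋅ ∇_x g`. -/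
def Yop (g : Z d → ℝ) (z : Z d) : ℝ := pt g z + ∑ i, z.2.2 i * px g i z

/-- Euclidean norm of the velocity gradient `∇_v g`. -/
def gradvNorm (g : Z d → ℝ) (z : Z d) : ℝ := Real.sqrt (∑ i, (pv g i z) ^ 2)

/-- (Frobenius) norm of the velocity Hessian `D²_v g`. -/
def hessvNorm (g : Z d → ℝ) (z : Z d) : ℝ := Real.sqrt (∑ i, ∑ j, (pvv g i j z) ^ 2)

/-- `g` is `C¹` in `(t,x)` and `C²` in `v` on `Q`, with continuous partial derivatives. -/
structure KinReg (g : Z d → ℝ) (Q : Set (Z d)) : Prop where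
  cont : ContinuousOn g Q
  dt : ∀ z ∈ Q, DifferentiableAt ℝ (fun s => g (s, z.2.1, z.2.2)) z.1
  dx : ∀ z ∈ Q, ∀ i, DifferentiableAt ℝ
    (fun s : ℝ => g (z.1, z.2.1 + s • EuclideanSpace.single i (1 : ℝ), z.2.2)) 0
  dv : ∀ z ∈ Q, ∀ i, DifferentiableAt ℝ
    (fun s : ℝ => g (z.1, z.2.1, z.2.2 + s • EuclideanSpace.single i (1 : ℝ))) 0
  dvv : ∀ z ∈ Q, ∀ i j, DifferentiableAt ℝ
    (fun s : ℝ => pv g j (z.1, z.2.1, z.2.2 + s • EuclideanSpace.single i (1 : ℝ))) 0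
  ptc : ContinuousOn (pt g) Q
  pxc : ∀ i, ContinuousOn (px g i) Q
  pvc : ∀ i, ContinuousOn (pv g i) Q
  pvvc : ∀ i j, ContinuousOn (pvv g i j) Q

/-- Sup norm (in `ℝ≥0∞`) of `h` over the set `Q`. -/
def supAbs (Q : Set (Z d)) (h : Z d → ℝ) : ℝ≥0∞ := ⨆ z ∈ Q, ENNReal.ofReal |h z|

/-- Kinetic Hölder seminorm of exponent `β` on `Q`. -/
def kHolder (β : ℝ) (Q : Set (Z d)) (h : Z d → ℝ) : ℝ≥0∞ :=
  ⨆ (z₀ ∈ Q) (r : ℝ) (_ : 0 < r) (_ : kCyl r z₀ ⊆ Q) (z ∈ kCyl r z₀),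
    ENNReal.ofReal (|h z - h z₀| / r ^ β)

/-- Polynomial of kinetic degree at most 2. -/
def kpoly (a b : ℝ) (q : Fin d → ℝ) (M : Matrix (Fin d) (Fin d) ℝ) (z : Z d) : ℝ :=
  a + b * z.1 + ∑ i, q i * z.2.2 i + (1 / 2) * ∑ i, ∑ j, M i j * z.2.2 i * z.2.2 j

/-- Kinetic Hölder seminorm of order `2 + α` on `Q`, by approximation with polynomials of
kinetic degree at most 2. -/
def kSemi2 (α : ℝ) (Q : Set (Z d)) (g : Z d → ℝ) : ℝ≥0∞ :=
  ⨆ (z₀ ∈ Q) (r : ℝ) (_ : 0 < r) (_ : kCyl r z₀ ⊆ Q),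
    (⨅ (a : ℝ) (b : ℝ) (q : Fin d → ℝ) (M : Matrix (Fin d) (Fin d) ℝ),
      ⨆ z ∈ kCyl r z₀, ENNReal.ofReal |g z - kpoly a b q M z|)
      / ENNReal.ofReal (r ^ (2 + α))

open Filter Topology

/-- Weak pointwise form of `(∂_t + v·∇_x - Δ_v) w (z) = ℓ`. -/
def HasL (w : Z d → ℝ) (z : Z d) (ℓ : ℝ) : Prop :=
  ∃ (b : ℝ) (m : Fin d → ℝ),
    Tendsto (fun s : ℝ => (w (z.1 - s, z.2.1 - s • z.2.2, z.2.2) - w z) / s) (𝓝[>] 0) (𝓝 (-b)) ∧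
    (∀ i, Tendsto (fun s : ℝ => (w (z.1, z.2.1, z.2.2 + s • EuclideanSpace.single i (1:ℝ))
      + w (z.1, z.2.1, z.2.2 - s • EuclideanSpace.single i (1:ℝ)) - 2 * w z) / s ^ 2)
      (𝓝[>] 0) (𝓝 (m i))) ∧ ℓ = b - ∑ i, m i

lemma HasL.add {w w' : Z d → ℝ} {z : Z d} {l l' : ℝ} (h : HasL w z l) (h' : HasL w' z l') :
    HasL (fun z => w z + w' z) z (l + l') := by
  obtain ⟨b, m, h1, h2, h3⟩ := h
  obtain ⟨b', m', h1', h2', h3'⟩ := h'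
  refine ⟨b + b', fun i => m i + m' i, ?_, ?_, ?_⟩
  · convert h1.add h1' using 2
    · ring
    · ring
  · intro i
    convert (h2 i).add (h2' i) using 2
    ring
  · rw [h3, h3', Finset.sum_add_distrib]; ring

lemma HasL.const_mul {w : Z d → ℝ} {z : Z d} {l : ℝ} (c : ℝ) (h : HasL w z l) :
    HasL (fun z => c * w z) z (c * l) := by
  obtain ⟨b, m, h1, h2, h3⟩ := h
  refine ⟨c * b, fun i => c * m i, ?_, ?_, ?_⟩
  · convert h1.const_mul c using 2
    · ring
    · ring
  · intro i
    convert (h2 i).const_mul c using 2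
    ring
  · rw [h3, ← Finset.mul_sum]; ring

lemma HasL.neg {w : Z d → ℝ} {z : Z d} {l : ℝ} (h : HasL w z l) :
    HasL (fun z => - w z) z (- l) := by
  simpa using h.const_mul (-1)

lemma HasL.sub {w w' : Z d → ℝ} {z : Z d} {l l' : ℝ} (h : HasL w z l) (h' : HasL w' z l') :
    HasL (fun z => w z - w' z) z (l - l') := by
  simpa [sub_eq_add_neg] using h.add h'.neg

lemma hd_congr {f g : ℝ → ℝ} {a b x : ℝ} (h : HasDerivAt f a x) (e : ∀ s, g s = f s) (e' : b = a) :
    HasDerivAt g b x := by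
  have : g = f := funext e
  rw [this, e']; exact h

/-- symmetric second difference from two derivatives -/
lemma tendsto_symm_diff (f f' : ℝ → ℝ) (m : ℝ) (h1 : ∀ s, HasDerivAt f (f' s) s)
    (h2 : HasDerivAt f' m 0) :
    Tendsto (fun s : ℝ => (f s + f (-s) - 2 * f 0) / s ^ 2) (𝓝[>] 0) (𝓝 m) := by
  have hneg : ∀ s, HasDerivAt (fun s => f (-s)) (-f' (-s)) s := by
    intro s
    have := (h1 (-s)).comp s (hasDerivAt_neg s)
    exact hd_congr this (fun _ => rfl) (by ring)
  have hd : ∀ s, HasDerivAt (fun s => f s + f (-s) - 2 * f 0) (f' s - f' (-s)) s := by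
    intro s
    have := ((h1 s).add (hneg s)).sub_const (2 * f 0)
    exact hd_congr this (fun _ => rfl) (by ring)
  refine HasDerivAt.lhopital_zero_nhdsGT (f' := fun s => f' s - f' (-s)) (g' := fun s => 2 * s)
    (Eventually.of_forall hd) ?_ ?_ ?_ ?_ ?_
  · refine Eventually.of_forall fun s => ?_
    simpa using hasDerivAt_pow 2 s
  · filter_upwards [self_mem_nhdsWithin] with s hs
    have : (0:ℝ) < s := hs
    positivity
  · have : Continuous (fun s => f s + f (-s) - 2 * f 0) :=
      continuous_iff_continuousAt.2 fun s => (hd s).continuousAt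
    have h := this.tendsto 0
    have e : f 0 + f (-0) - 2 * f 0 = 0 := by rw [neg_zero]; ring
    simp only [e] at h
    exact h.mono_left nhdsWithin_le_nhds
  · have : Continuous (fun s : ℝ => s ^ 2) := by fun_prop
    have h := this.tendsto 0
    simp only [ne_eq, OfNat.ofNat_ne_zero, not_false_eq_true, zero_pow] at h
    exact h.mono_left nhdsWithin_le_nhds
  · have hg : HasDerivAt (fun s => f' s - f' (-s)) (m + m) 0 := by
      have h2' : HasDerivAt f' m (-0) := by simpa using h2
      have := h2.sub (h2'.comp 0 (hasDerivAt_neg 0))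
      exact hd_congr this (fun _ => rfl) (by ring)
    have := hg.tendsto_slope.mono_left (nhdsGT_le_nhdsNE 0)
    have := this.const_mul (1/2)
    convert this using 2
    · simp [slope_def_field]; ring
    · ring

lemma deriv_diag (h hu : ℝ → ℝ → ℝ) (a c : ℝ)
    (H1 : ∀ s u, HasDerivAt (h s) (hu s u) u)
    (H2 : ContinuousAt (fun p : ℝ × ℝ => hu p.1 p.2) (0, 0))
    (H3 : HasDerivAt (fun s => h s 0) a 0) :
    HasDerivAt (fun s => h s (s * c)) (a + c * hu 0 0) 0 := by
  have key : HasDerivAt (fun s => h s (s * c) - h s 0) (c * hu 0 0) 0 := by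
    rw [hasDerivAt_iff_isLittleO, Asymptotics.isLittleO_iff]
    intro ε hε
    have hε' : 0 < ε / (|c| + 1) := by positivity
    obtain ⟨r, hr, hb⟩ := Metric.continuousAt_iff.1 H2 _ hε'
    have hr' : 0 < r / (|c| + 1) := by positivity
    filter_upwards [Metric.ball_mem_nhds (0:ℝ) hr'] with s hs
    have hs' : |s| < r / (|c| + 1) := by simpa using hs
    have hs1 : |s| * (|c| + 1) < r := by rwa [lt_div_iff₀ (by positivity)] at hs'
    have hsr : |s| < r := by nlinarith [abs_nonneg s, abs_nonneg c]
    have hscr : |s * c| < r := by rw [abs_mul]; nlinarith [abs_nonneg s, abs_nonneg c]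
    have conv : Convex ℝ (Metric.ball (0:ℝ) r) := convex_ball _ _
    have := conv.norm_image_sub_le_of_norm_hasDerivWithin_le
      (f := fun u => h s u - u * hu 0 0) (f' := fun u => hu s u - hu 0 0)
      (C := ε / (|c| + 1)) (x := 0) (y := s * c) ?_ ?_ ?_ ?_
    · simp only [zero_mul, sub_zero, sub_self, smul_eq_mul] at this ⊢
      have e : h s (s * c) - h s 0 - s * (c * hu 0 0) = h s (s * c) - s * c * hu 0 0 - h s 0 := by
        ring
      rw [e]
      refine this.trans ?_
      rw [norm_mul, Real.norm_eq_abs, Real.norm_eq_abs, div_mul_eq_mul_div, div_le_iff₀ (by positivity)]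
      have : 0 ≤ |s| * ε := by positivity
      nlinarith
    · intro u _
      have h5 := (hasDerivAt_id u).mul_const (hu 0 0)
      simp only [id, one_mul] at h5
      exact ((H1 s u).sub h5).hasDerivWithinAt
    · intro u hu'
      have : dist (s, u) ((0:ℝ), (0:ℝ)) < r := by
        rw [Prod.dist_eq]; simp only [max_lt_iff]
        refine ⟨by simpa using hsr, hu'⟩
      exact (hb this).le
    · simpa using hr
    · simpa using hscr
  exact hd_congr (H3.add key) (fun s => by simp) rfl

lemma KinReg.hasY {g : Z d → ℝ} (hg : KinReg g Set.univ) (z : Z d) (A : Finset (Fin d)) :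
    HasDerivAt (fun s : ℝ => g (z.1 + s, z.2.1 + s • (∑ i ∈ A, z.2.2 i • EuclideanSpace.single i (1:ℝ)), z.2.2))
      (pt g z + ∑ i ∈ A, z.2.2 i * px g i z) 0 := by
  classical
  induction A using Finset.induction_on with
  | empty =>
    have h := (hg.dt z (Set.mem_univ _)).hasDerivAt
    have h' : HasDerivAt (fun s => g (s, z.2.1, z.2.2)) (pt g z) (z.1 + 0) := by
      simpa [pt] using h
    have := HasDerivAt.comp_const_add z.1 0 h'
    simpa using this
  | insert j A hj ih =>
    simp only [Finset.sum_insert hj]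
    set V := (∑ i ∈ A, z.2.2 i • EuclideanSpace.single i (1:ℝ) : E d) with hV
    have := deriv_diag (fun s u => g (z.1 + s, z.2.1 + s • V + u • EuclideanSpace.single j (1:ℝ), z.2.2))
      (fun s u => px g j (z.1 + s, z.2.1 + s • V + u • EuclideanSpace.single j (1:ℝ), z.2.2))
      (pt g z + ∑ i ∈ A, z.2.2 i * px g i z) (z.2.2 j) ?_ ?_ ?_
    · refine hd_congr this (fun s => ?_) ?_
      · congr 3
        rw [smul_add, smul_smul]; abel
      · simp; ring
    · intro s u
      have h := (hg.dx (z.1 + s, z.2.1 + s • V + u • EuclideanSpace.single j (1:ℝ), z.2.2)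
        (Set.mem_univ _) j).hasDerivAt
      have h' := HasDerivAt.comp_add_const (𝕜 := ℝ) u (-u) (f' := px g j (z.1 + s, z.2.1 + s • V + u • EuclideanSpace.single j (1:ℝ), z.2.2)) (f := fun u' : ℝ => g (z.1 + s, z.2.1 + s • V + u • EuclideanSpace.single j (1:ℝ) + u' • EuclideanSpace.single j (1:ℝ), z.2.2)) (by
          simpa [px] using h)
      refine hd_congr h' (fun u' => ?_) rfl
      congr 3
      module
    · have := continuousOn_univ.1 (hg.pxc j)
      exact (this.comp (by fun_prop : Continuous (fun p : ℝ × ℝ => ((z.1 + p.1, z.2.1 + p.1 • V + p.2 • EuclideanSpace.single j (1:ℝ), z.2.2) : Z d)))).continuousAt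
    · simpa using ih

lemma KinReg.hasL {g : Z d → ℝ} (hg : KinReg g Set.univ) (z : Z d) :
    HasL g z (Yop g z - ∑ i, pvv g i i z) := by
  refine ⟨Yop g z, fun i => pvv g i i z, ?_, ?_, rfl⟩
  · have h := hg.hasY z Finset.univ
    have e : (∑ i, z.2.2 i • EuclideanSpace.single i (1:ℝ) : E d) = z.2.2 := by
      ext j
      simp [Finset.sum_apply, Pi.single_apply]
    rw [e] at h
    have h0 : HasDerivAt (fun s : ℝ => g (z.1 + s, z.2.1 + s • z.2.2, z.2.2)) (Yop g z) (-0) := by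
      simpa [Yop] using h
    have h' := h0.comp 0 (hasDerivAt_neg (0:ℝ))
    have := h'.tendsto_slope.mono_left (nhdsGT_le_nhdsNE 0)
    convert this using 2
    · simp [slope_def_field, sub_eq_add_neg]
    · ring
  · intro i
    have := tendsto_symm_diff (fun s => g (z.1, z.2.1, z.2.2 + s • EuclideanSpace.single i (1:ℝ)))
      (fun s => pv g i (z.1, z.2.1, z.2.2 + s • EuclideanSpace.single i (1:ℝ))) (pvv g i i z) ?_ ?_
    · simpa [sub_eq_add_neg] using this
    · intro s
      have h := (hg.dv (z.1, z.2.1, z.2.2 + s • EuclideanSpace.single i (1:ℝ))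
        (Set.mem_univ _) i).hasDerivAt
      have h' := HasDerivAt.comp_add_const (𝕜 := ℝ) s (-s) (f' := pv g i (z.1, z.2.1, z.2.2 + s • EuclideanSpace.single i (1:ℝ))) (f := fun u' : ℝ => g (z.1, z.2.1, z.2.2 + s • EuclideanSpace.single i (1:ℝ) + u' • EuclideanSpace.single i (1:ℝ))) (by
          simpa [pv] using h)
      refine hd_congr h' (fun u' => ?_) rfl
      congr 3
      module
    · simpa [pvv, pv] using (hg.dvv z (Set.mem_univ _) i i).hasDerivAt


/-- Quadratic weight. -/
def JJ (x v : E d) : ℝ := 1 + ‖x‖ ^ 2 + ‖v‖ ^ 2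

lemma one_le_JJ (x v : E d) : 1 ≤ JJ x v := by
  unfold JJ; nlinarith [sq_nonneg ‖x‖, sq_nonneg ‖v‖]

lemma barrier_hasL (lam : ℝ) (φ φ' φ'' : ℝ → ℝ) (h1 : ∀ s, HasDerivAt φ (φ' s) s)
    (h2 : ∀ s, HasDerivAt φ' (φ'' s) s) (z : Z d) :
    HasL (fun z => Real.exp (lam * (z.1 + 1)) * φ (JJ z.2.1 z.2.2)) z
      (Real.exp (lam * (z.1 + 1)) * (lam * φ (JJ z.2.1 z.2.2)
        + φ' (JJ z.2.1 z.2.2) * (2 * inner ℝ z.2.1 z.2.2)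
        - 4 * φ'' (JJ z.2.1 z.2.2) * ‖z.2.2‖ ^ 2 - 2 * d * φ' (JJ z.2.1 z.2.2))) := by
  obtain ⟨t, x, v⟩ := z
  dsimp only
  refine ⟨Real.exp (lam * (t + 1)) * (lam * φ (JJ x v) + φ' (JJ x v) * (2 * inner ℝ x v)),
    fun i => Real.exp (lam * (t + 1)) * (φ'' (JJ x v) * (2 * v i) * (2 * v i) + φ' (JJ x v) * 2), ?_, ?_, ?_⟩
  · have hJ : ∀ s : ℝ, JJ (x - s • v) v = JJ x v - 2 * inner ℝ x v * s + ‖v‖ ^ 2 * s ^ 2 := by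
      intro s
      unfold JJ
      rw [norm_sub_sq_real, norm_smul, inner_smul_right, mul_pow, Real.norm_eq_abs, sq_abs]; ring
    have hq : HasDerivAt (fun s : ℝ => JJ x v - 2 * inner ℝ x v * s + ‖v‖ ^ 2 * s ^ 2)
        (- (2 * inner ℝ x v)) 0 := by
      have a1 := ((hasDerivAt_id (0:ℝ)).const_mul (2 * inner ℝ x v)).const_sub (JJ x v)
      have a2 := (hasDerivAt_pow 2 (0:ℝ)).const_mul (‖v‖ ^ 2)
      exact hd_congr (a1.add a2) (fun _ => rfl) (by simp)
    have he : HasDerivAt (fun s : ℝ => Real.exp (lam * (t - s + 1)))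
        (Real.exp (lam * (t + 1)) * (-lam)) 0 := by
      have a1 := (((hasDerivAt_id (0:ℝ)).const_sub t).add_const 1).const_mul lam
      exact hd_congr a1.exp (fun _ => rfl) (by simp)
    have hφ := h1 (JJ x v - 2 * inner ℝ x v * 0 + ‖v‖ ^ 2 * 0 ^ 2)
    have hc := he.mul (hφ.comp 0 hq)
    have := hc.tendsto_slope.mono_left (nhdsGT_le_nhdsNE 0)
    convert this using 2
    · simp [slope_def_field, hJ]
    · simp; ring
  · intro i
    have hJ : ∀ s : ℝ, JJ x (v + s • EuclideanSpace.single i (1:ℝ)) = JJ x v + 2 * v i * s + s ^ 2 := by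
      intro s
      unfold JJ
      rw [norm_add_sq_real, norm_smul, inner_smul_right, mul_pow, Real.norm_eq_abs, sq_abs,
        EuclideanSpace.inner_single_right]
      simp; ring
    have hq : ∀ s : ℝ, HasDerivAt (fun s : ℝ => JJ x v + 2 * v i * s + s ^ 2)
        (2 * v i + 2 * s) s := by
      intro s
      have a1 := ((hasDerivAt_id s).const_mul (2 * v i)).const_add (JJ x v)
      have a2 := (hasDerivAt_pow 2 s)
      exact hd_congr (a1.add a2) (fun _ => rfl) (by simp)
    have := tendsto_symm_diff (fun s => Real.exp (lam * (t + 1)) * φ (JJ x v + 2 * v i * s + s ^ 2))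
      (fun s => Real.exp (lam * (t + 1)) * (φ' (JJ x v + 2 * v i * s + s ^ 2) * (2 * v i + 2 * s)))
      (Real.exp (lam * (t + 1)) * (φ'' (JJ x v) * (2 * v i) * (2 * v i) + φ' (JJ x v) * 2)) ?_ ?_
    · convert this using 3 with s
      simp only [sub_eq_add_neg, ← neg_smul, hJ]
      simp
    · intro s
      exact ((h1 _).comp s (hq s)).const_mul _
    · have a := ((h2 _).comp 0 (hq 0)).mul (((hasDerivAt_id (0:ℝ)).const_mul 2).const_add (2 * v i))
      exact hd_congr (a.const_mul (Real.exp (lam * (t + 1)))) (fun _ => rfl) (by simp)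
  · have : ‖v‖ ^ 2 = ∑ i, v i ^ 2 := EuclideanSpace.real_norm_sq_eq v
    rw [this, ← Finset.mul_sum, Finset.sum_add_distrib]
    have e : ∑ i, φ'' (JJ x v) * (2 * v i) * (2 * v i) = 4 * φ'' (JJ x v) * ∑ i, v i ^ 2 := by
      rw [Finset.mul_sum]; exact Finset.sum_congr rfl fun i _ => by ring
    rw [e]
    simp; ring

/-- rate -/
def lamd (d : ℕ) : ℝ := 6 * d + 28

lemma inner_le_JJ (x v : E d) : -JJ x v ≤ 2 * inner ℝ x v := by
  have := norm_add_sq_real x v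
  unfold JJ
  nlinarith [sq_nonneg ‖x + v‖]

lemma barrier1 (z : Z d) : ∃ l, HasL (fun z => Real.exp (lamd d * (z.1 + 1)) * JJ z.2.1 z.2.2) z l ∧
    Real.exp (lamd d * (z.1 + 1)) * JJ z.2.1 z.2.2 ≤ l := by
  refine ⟨_, barrier_hasL (lamd d) (fun s => s) (fun _ => 1) (fun _ => 0) (fun s => hasDerivAt_id s)
    (fun s => hasDerivAt_const s 1) z, ?_⟩
  refine mul_le_mul_of_nonneg_left ?_ (Real.exp_pos _).le
  have h1 := one_le_JJ z.2.1 z.2.2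
  have h2 := inner_le_JJ z.2.1 z.2.2
  have : (0:ℝ) ≤ d := by positivity
  unfold lamd
  nlinarith

lemma barrier3 (z : Z d) : ∃ l, HasL (fun z => Real.exp (lamd d * (z.1 + 1)) * JJ z.2.1 z.2.2 ^ 3) z l ∧
    0 < l := by
  refine ⟨_, barrier_hasL (lamd d) (fun s => s ^ 3) (fun s => 3 * s ^ 2) (fun s => 6 * s)
    (fun s => hd_congr (hasDerivAt_pow 3 s) (fun _ => rfl) (by norm_num))
    (fun s => hd_congr ((hasDerivAt_pow 2 s).const_mul 3) (fun _ => rfl) (by norm_num; ring)) z, ?_⟩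
  refine mul_pos (Real.exp_pos _) ?_
  have h1 := one_le_JJ z.2.1 z.2.2
  have h2 := inner_le_JJ z.2.1 z.2.2
  have h3 : ‖z.2.2‖ ^ 2 ≤ JJ z.2.1 z.2.2 := by unfold JJ; nlinarith [sq_nonneg ‖z.2.1‖]
  set j := JJ z.2.1 z.2.2
  have : (0:ℝ) ≤ d := by positivity
  unfold lamd
  have e1 : 3 * j ^ 2 * (-j) ≤ 3 * j ^ 2 * (2 * inner ℝ z.2.1 z.2.2) :=
    mul_le_mul_of_nonneg_left h2 (by positivity)
  have e2 : 4 * (6 * j) * ‖z.2.2‖ ^ 2 ≤ 4 * (6 * j) * j := mul_le_mul_of_nonneg_left h3 (by positivity)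
  have e3 : j ^ 2 ≤ j ^ 3 := pow_le_pow_right₀ h1 (by norm_num)
  have e4 : 2 * d * (3 * j ^ 2) ≤ 2 * d * (3 * j ^ 3) := by gcongr
  have e5 : 0 < j ^ 3 := by positivity
  nlinarith

lemma hasL_max_nonneg {w : Z d → ℝ} {z : Z d} {l : ℝ} (h : HasL w z l) (hz : -1 < z.1)
    (hmax : ∀ z', -1 ≤ z'.1 → z'.1 ≤ z.1 → w z' ≤ w z) : 0 ≤ l := by
  obtain ⟨b, m, h1, h2, h3⟩ := h
  have hb : -b ≤ 0 := by
    refine le_of_tendsto h1 ?_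
    have : ∀ᶠ s : ℝ in 𝓝[>] 0, s < z.1 + 1 := 
      nhdsWithin_le_nhds (Iio_mem_nhds (by linarith))
    filter_upwards [this, self_mem_nhdsWithin] with s hs hs'
    have hs' : 0 < s := hs'
    refine div_nonpos_of_nonpos_of_nonneg ?_ hs'.le
    have := hmax (z.1 - s, z.2.1 - s • z.2.2, z.2.2) (by dsimp only; linarith) (by dsimp only; linarith)
    linarith
  have hm : ∀ i, m i ≤ 0 := by
    intro i
    refine le_of_tendsto (h2 i) ?_
    refine Eventually.of_forall fun s => ?_
    refine div_nonpos_of_nonpos_of_nonneg ?_ (sq_nonneg s)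
    have a := hmax (z.1, z.2.1, z.2.2 + s • EuclideanSpace.single i (1:ℝ)) hz.le le_rfl
    have b := hmax (z.1, z.2.1, z.2.2 - s • EuclideanSpace.single i (1:ℝ)) hz.le le_rfl
    linarith
  have := Finset.sum_nonpos (s := Finset.univ) (fun i _ => hm i)
  linarith

lemma continuous_JJ : Continuous (fun z : Z d => JJ z.2.1 z.2.2) := by
  unfold JJ; fun_prop

lemma maxp (w ℓ : Z d → ℝ) (K C : ℝ) (hK : 0 ≤ K) (hC : 0 ≤ C) (hc : Continuous w)
    (hL : ∀ z : Z d, -1 < z.1 → z.1 ≤ 0 → HasL w z (ℓ z))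
    (hl : ∀ z : Z d, -1 < z.1 → z.1 ≤ 0 → ℓ z ≤ K * JJ z.2.1 z.2.2)
    (h0 : ∀ x v, w (-1, x, v) ≤ 0)
    (hgr : ∀ z : Z d, -1 ≤ z.1 → z.1 ≤ 0 → w z ≤ C * JJ z.2.1 z.2.2 ^ 2) (z : Z d)
    (hz : -1 ≤ z.1) (hz' : z.1 ≤ 0) : w z ≤ K * (Real.exp (lamd d) * JJ z.2.1 z.2.2) := by
  have hlam : 0 ≤ lamd d := by unfold lamd; positivity
  -- main claim
  have key : ∀ ε : ℝ, 0 < ε → ∀ z : Z d, -1 ≤ z.1 → z.1 ≤ 0 →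
      w z - K * (Real.exp (lamd d * (z.1 + 1)) * JJ z.2.1 z.2.2)
        - ε * (Real.exp (lamd d * (z.1 + 1)) * JJ z.2.1 z.2.2 ^ 3) ≤ 0 := by
    intro ε hε z1 hz1 hz1'
    by_contra hcon
    push Not at hcon
    set u : Z d → ℝ := fun z => w z - K * (Real.exp (lamd d * (z.1 + 1)) * JJ z.2.1 z.2.2)
        - ε * (Real.exp (lamd d * (z.1 + 1)) * JJ z.2.1 z.2.2 ^ 3) with hu
    have huc : Continuous u := by
      have := continuous_JJ (d := d)
      rw [hu]; fun_prop
    have hbig : ∀ z : Z d, -1 ≤ z.1 → z.1 ≤ 0 → C / ε ≤ JJ z.2.1 z.2.2 → u z ≤ 0 := by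
      intro z h1 h2 h3
      have hJ := one_le_JJ z.2.1 z.2.2
      have he : 1 ≤ Real.exp (lamd d * (z.1 + 1)) := Real.one_le_exp (mul_nonneg hlam (by linarith))
      have := hgr z h1 h2
      rw [div_le_iff₀ hε] at h3
      have e1 : 0 ≤ K * (Real.exp (lamd d * (z.1 + 1)) * JJ z.2.1 z.2.2) := by positivity
      have e2 : JJ z.2.1 z.2.2 ^ 3 ≤ Real.exp (lamd d * (z.1 + 1)) * JJ z.2.1 z.2.2 ^ 3 :=
        le_mul_of_one_le_left (by positivity) he
      have e3 : C * JJ z.2.1 z.2.2 ^ 2 ≤ JJ z.2.1 z.2.2 * ε * JJ z.2.1 z.2.2 ^ 2 := by gcongr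
      have e4 := mul_le_mul_of_nonneg_left e2 hε.le
      simp only [hu]
      nlinarith
    set R := C / ε + 1 with hR
    have hRp : 0 < R := by positivity
    set Kc : Set (Z d) := Set.Icc (-1:ℝ) 0 ×ˢ (Metric.closedBall (0 : E d) R ×ˢ Metric.closedBall (0 : E d) R)
    have hKc : IsCompact Kc := isCompact_Icc.prod ((isCompact_closedBall _ _).prod (isCompact_closedBall _ _))
    have hin : ∀ z : Z d, -1 ≤ z.1 → z.1 ≤ 0 → 0 < u z → z ∈ Kc := by
      intro z h1 h2 h3
      have h4 : JJ z.2.1 z.2.2 < C / ε := by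
        by_contra h; push Not at h; linarith [hbig z h1 h2 h]
      refine ⟨⟨h1, h2⟩, ?_, ?_⟩
      · simp only [mem_closedBall_zero_iff]
        unfold JJ at h4
        nlinarith [sq_nonneg ‖z.2.1‖, sq_nonneg ‖z.2.2‖, sq_nonneg (‖z.2.1‖ - 1)]
      · simp only [mem_closedBall_zero_iff]
        unfold JJ at h4
        nlinarith [sq_nonneg ‖z.2.1‖, sq_nonneg ‖z.2.2‖, sq_nonneg (‖z.2.2‖ - 1)]
    obtain ⟨zm, hzm, hmax⟩ := hKc.exists_isMaxOn ⟨z1, hin z1 hz1 hz1' hcon⟩ huc.continuousOn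
    have hpos : 0 < u zm := lt_of_lt_of_le hcon (hmax (hin z1 hz1 hz1' hcon))
    have hzm1 : -1 < zm.1 := by
      rcases lt_or_eq_of_le hzm.1.1 with h | h
      · exact h
      · exfalso
        have := h0 zm.2.1 zm.2.2
        have e : zm = (-1, zm.2.1, zm.2.2) := by rw [h]
        rw [← e] at this
        have hJ := one_le_JJ zm.2.1 zm.2.2
        have e1 : 0 ≤ K * (Real.exp (lamd d * (zm.1 + 1)) * JJ zm.2.1 zm.2.2) := by positivity
        have e2 : 0 ≤ ε * (Real.exp (lamd d * (zm.1 + 1)) * JJ zm.2.1 zm.2.2 ^ 3) := by positivity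
        simp only [hu] at hpos
        linarith
    obtain ⟨l1, hl1, hl1'⟩ := barrier1 zm
    obtain ⟨l3, hl3, hl3'⟩ := barrier3 zm
    have hLu : HasL u zm (ℓ zm - K * l1 - ε * l3) :=
      ((hL zm hzm1 hzm.1.2).sub (hl1.const_mul K)).sub (hl3.const_mul ε)
    have := hasL_max_nonneg hLu hzm1 (by
      intro z' h1 h2
      by_cases h : 0 < u z'
      · exact hmax (hin z' h1 (h2.trans hzm.1.2) h)
      · push Not at h; linarith)
    have h5 := hl zm hzm1 hzm.1.2
    have hJ := one_le_JJ zm.2.1 zm.2.2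
    have he : 1 ≤ Real.exp (lamd d * (zm.1 + 1)) := Real.one_le_exp (mul_nonneg hlam (by linarith))
    have e1 : JJ zm.2.1 zm.2.2 ≤ Real.exp (lamd d * (zm.1 + 1)) * JJ zm.2.1 zm.2.2 :=
        le_mul_of_one_le_left (by positivity) he
    have e2 := mul_le_mul_of_nonneg_left (e1.trans hl1') hK
    have e3 := mul_pos hε hl3'
    linarith
  have hJ := one_le_JJ z.2.1 z.2.2
  have hle : Real.exp (lamd d * (z.1 + 1)) ≤ Real.exp (lamd d) := Real.exp_le_exp.2 (by nlinarith)
  have e1 : K * (Real.exp (lamd d * (z.1 + 1)) * JJ z.2.1 z.2.2) ≤ K * (Real.exp (lamd d) * JJ z.2.1 z.2.2) := by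
    gcongr
  refine le_trans ?_ e1
  refine le_of_forall_pos_le_add fun η hη => ?_
  have hA : 0 < Real.exp (lamd d * (z.1 + 1)) * JJ z.2.1 z.2.2 ^ 3 := by positivity
  have := key (η / (Real.exp (lamd d * (z.1 + 1)) * JJ z.2.1 z.2.2 ^ 3)) (by positivity) z hz hz'
  rw [div_mul_cancel₀ _ hA.ne'] at this
  linarith


/-- quadratic form of the Kolmogorov kernel -/
def qf (η : E d × E d) : ℝ := ‖η.2‖ ^ 2 + 3 * inner ℝ η.2 η.1 + 3 * ‖η.1‖ ^ 2

/-- unnormalised kernel at time one -/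
def rho (η : E d × E d) : ℝ := Real.exp (- qf η)

lemma continuous_rho : Continuous (rho (d := d)) := by
  unfold rho qf; fun_prop

lemma rho_pos (η : E d × E d) : 0 < rho η := Real.exp_pos _

lemma qf_lower (η : E d × E d) : (1 / 8) * JJ η.1 η.2 - 1 / 8 ≤ qf η := by
  unfold qf JJ
  have := abs_real_inner_le_norm η.2 η.1
  have h2 := (abs_le.1 this).1
  nlinarith [sq_nonneg (6 * ‖η.1‖ - 3.5 * ‖η.2‖), sq_nonneg ‖η.1‖, sq_nonneg ‖η.2‖,
    norm_nonneg η.1, norm_nonneg η.2]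

lemma continuous_JJ2 : Continuous (fun η : E d × E d => JJ η.1 η.2) := by
  unfold JJ; fun_prop

lemma rho_le (η : E d × E d) : rho η ≤ Real.exp 1 * Real.exp (-(1/8) * JJ η.1 η.2) := by
  unfold rho
  rw [← Real.exp_add]
  apply Real.exp_le_exp.2
  have := qf_lower η
  linarith

lemma integrable_gau1 {c : ℝ} (hc : 0 < c) : Integrable (fun v : E d => Real.exp (-c * ‖v‖ ^ 2)) := by
  have := (GaussianFourier.integrable_cexp_neg_mul_sq_norm_add (V := E d) (b := (c:ℂ)) (by simpa using hc) 0 0).norm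
  refine this.congr (Eventually.of_forall fun v => ?_)
  simp only [Complex.norm_exp]
  congr 1
  simp [← Complex.ofReal_pow]

lemma integrable_gau {c : ℝ} (hc : 0 < c) :
    Integrable (fun η : E d × E d => Real.exp (-c * JJ η.1 η.2)) := by
  have := ((integrable_gau1 (d := d) hc).mul_prod (integrable_gau1 (d := d) hc)).const_mul (Real.exp (-c))
  refine this.congr (Eventually.of_forall fun η => ?_)
  simp only [← Real.exp_add]
  congr 1
  unfold JJ; ring

lemma integrable_pow_gau {c : ℝ} (hc : 0 < c) (k : ℕ) :
    Integrable (fun η : E d × E d => JJ η.1 η.2 ^ k * Real.exp (-c * JJ η.1 η.2)) := by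
  have h := (integrable_gau (d := d) (c := c / 2) (by positivity)).const_mul (k.factorial / (c/2) ^ k)
  refine h.mono' ?_ (Eventually.of_forall fun η => ?_)
  · have := continuous_JJ2 (d := d)
    exact Continuous.aestronglyMeasurable (by fun_prop)
  · have hj := one_le_JJ η.1 η.2
    rw [Real.norm_of_nonneg (by positivity)]
    have h1 := Real.pow_div_factorial_le_exp (x := c / 2 * JJ η.1 η.2) (by positivity) k
    have e : Real.exp (-c * JJ η.1 η.2) = Real.exp (-(c/2) * JJ η.1 η.2) * Real.exp (-(c/2) * JJ η.1 η.2) := by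
      rw [← Real.exp_add]; congr 1; ring
    have e2 : Real.exp (c / 2 * JJ η.1 η.2) * Real.exp (-(c/2) * JJ η.1 η.2) = 1 := by
      rw [← Real.exp_add, ← Real.exp_zero]; congr 1; ring
    rw [e, ← mul_assoc]
    refine mul_le_mul_of_nonneg_right ?_ (Real.exp_pos _).le
    rw [mul_pow, div_le_iff₀ (by positivity)] at h1
    rw [le_div_iff₀ (by positivity)]
    calc _ = (c/2) ^ k * JJ η.1 η.2 ^ k * Real.exp (-(c/2) * JJ η.1 η.2) := by ring
      _ ≤ (Real.exp (c / 2 * JJ η.1 η.2) * k.factorial) * Real.exp (-(c/2) * JJ η.1 η.2) := by gcongr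
      _ = (Real.exp (c / 2 * JJ η.1 η.2) * Real.exp (-(c/2) * JJ η.1 η.2)) * k.factorial := by ring
      _ = _ := by rw [e2, one_mul]

lemma integrable_of_bd {h : E d × E d → ℝ} (hc : Continuous h) (C : ℝ) (k : ℕ)
    (hb : ∀ η, |h η| ≤ C * JJ η.1 η.2 ^ k) : Integrable (fun η => h η * rho η) := by
  have hi := (integrable_pow_gau (d := d) (c := 1/8) (by norm_num) k).const_mul (C * Real.exp 1)
  refine hi.mono' (hc.mul continuous_rho).aestronglyMeasurable (Eventually.of_forall fun η => ?_)
  rw [norm_mul, Real.norm_eq_abs, Real.norm_of_nonneg (rho_pos η).le]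
  calc _ ≤ (C * JJ η.1 η.2 ^ k) * (Real.exp 1 * Real.exp (-(1/8) * JJ η.1 η.2)) :=
        mul_le_mul (hb η) (rho_le η) (rho_pos η).le ((abs_nonneg _).trans (hb η))
    _ = _ := by ring

/-- normalisation -/
def c0 (d : ℕ) : ℝ := ∫ η : E d × E d, rho η

lemma c0_pos : 0 < c0 d := by
  unfold c0
  have hi : Integrable (rho (d := d)) := by
    have := integrable_of_bd (d := d) (h := fun _ => 1) continuous_const 1 0 (by simp)
    simpa using this
  rw [integral_pos_iff_support_of_nonneg (fun η => (rho_pos η).le) hi]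
  have : Function.support (rho (d := d)) = Set.univ := by
    ext η; simp [(rho_pos η).ne']
  rw [this]
  exact isOpen_univ.measure_pos volume Set.univ_nonempty

/-- exponent correction -/
def theta (s : ℝ) (y u Y W : E d) : ℝ :=
  -(2 * d * Real.log (1 + s)) - ((1 + s)⁻¹ * (‖W‖ ^ 2 + inner ℝ W u + ‖u‖ ^ 2)
    + 3 * (1 + s)⁻¹ ^ 2 * inner ℝ (W + u) (Y - y) + 3 * (1 + s)⁻¹ ^ 3 * ‖Y - y‖ ^ 2) + qf (Y, W)

lemma abs_mul_le' {a b A B : ℝ} (h1 : |a| ≤ A) (h2 : |b| ≤ B) : |a * b| ≤ A * B := by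
  rw [abs_mul]; exact mul_le_mul h1 h2 (abs_nonneg _) ((abs_nonneg _).trans h1)

lemma sum_bd {T0 T1 T2 T3 T4 T5 T6 T7 T8 T9 T10 A X : ℝ} (t0 : |T0| ≤ A) (t1 : |T1| ≤ X)
    (t2 : |T2| ≤ 2 * X) (t3 : |T3| ≤ 2 * X) (t4 : |T4| ≤ 3 * X) (t5 : |T5| ≤ 2 * X) (t6 : |T6| ≤ 5 * X)
    (t7 : |T7| ≤ 2 * X) (t8 : |T8| ≤ 5 * X) (t9 : |T9| ≤ 3 * X) (t10 : |T10| ≤ 3 * X) (hX : 0 < X) :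
    |-T0 - T1 - T2 - T3 - 3 * T4 + 3 * T5 - 3 * T6 + 3 * T7 - 3 * T8 + 6 * T9 - 3 * T10| ≤ A + 100 * X := by
  rw [abs_le] at *
  constructor <;> linarith

lemma sigma_bds (s l : ℝ) (hl0 : 0 < l) (hl : l ≤ 1 / 2) (hs : -l ^ 2 < s) (hs' : s ≤ 0) :
    |Real.log (1 + s) - s| ≤ l ^ 3 ∧ |(1 + s)⁻¹ - 1 + s| ≤ l ^ 3 ∧ |(1 + s)⁻¹ - 1| ≤ 2 * l ^ 2 ∧
    |(1 + s)⁻¹ ^ 2 - 1 + 2 * s| ≤ 3 * l ^ 3 ∧ |(1 + s)⁻¹ ^ 2 - 1| ≤ 5 * l ^ 2 ∧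
    |(1 + s)⁻¹ ^ 3 - 1 + 3 * s| ≤ 5 * l ^ 3 ∧ |(1 + s)⁻¹ ^ 2| ≤ 2 ∧ |(1 + s)⁻¹ ^ 3| ≤ 3 := by
  have hl2 : l ^ 2 ≤ 1 / 4 := by nlinarith
  have hs4 : -(1/4) ≤ s := by linarith
  have hp : 0 < 1 + s := by linarith
  set σ := (1 + s)⁻¹ with hσ
  have hσ1 : 1 ≤ σ := by rw [hσ, one_le_inv₀ hp]; linarith
  have hσ2 : σ ≤ 4 / 3 := by
    rw [hσ, inv_le_comm₀ hp (by norm_num)]; norm_num; linarith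
  have hss : σ * (1 + s) = 1 := inv_mul_cancel₀ hp.ne'
  have hσs : σ - 1 = - s * σ := by linarith
  have hs2 : s ^ 2 ≤ l ^ 3 / 2 := by
    have : s ^ 2 ≤ (l ^ 2) ^ 2 := by apply sq_le_sq' <;> nlinarith
    have : (l ^ 2) ^ 2 ≤ l ^ 3 * (1/2) := by
      have : 0 < l ^ 3 := by positivity
      nlinarith
    linarith
  have hl3 : 0 < l ^ 3 := by positivity
  -- error terms
  have b0 : |Real.log (1 + s) - s| ≤ l ^ 3 := by
    have u1 := Real.log_le_sub_one_of_pos hp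
    have u2 := Real.one_sub_inv_le_log_of_pos hp
    rw [← hσ] at u2
    rw [abs_le]
    have : s ^ 2 * σ ≤ l ^ 3 / 2 * (4/3) := mul_le_mul hs2 hσ2 (by linarith) (by positivity)
    constructor
    · nlinarith
    · linarith
  have b1 : |σ - 1 + s| ≤ l ^ 3 := by
    have e : σ - 1 + s = s ^ 2 * σ := by linear_combination hσs - s * hσs
    rw [e, abs_of_nonneg (by positivity)]
    have : s ^ 2 * σ ≤ l ^ 3 / 2 * (4/3) := mul_le_mul hs2 hσ2 (by linarith) (by positivity)
    linarith
  have b2 : |σ - 1| ≤ 2 * l ^ 2 := by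
    rw [abs_of_nonneg (by linarith), hσs]
    nlinarith
  have b3 : |σ ^ 2 - 1 + 2 * s| ≤ 3 * l ^ 3 := by
    have e : σ ^ 2 - 1 + 2 * s = s ^ 2 * (σ * (σ + 2)) := by
      have : σ ^ 2 - 1 = - s * (σ * (σ + 1)) := by linear_combination (σ + 1) * hσs
      linear_combination this - s * (σ + 2) * hσs
    rw [e, abs_of_nonneg (by positivity)]
    have h' : σ * (σ + 2) ≤ 5 := by nlinarith
    have : s ^ 2 * (σ * (σ + 2)) ≤ l ^ 3 / 2 * 5 := mul_le_mul hs2 h' (by positivity) (by positivity)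
    linarith
  have b4 : |σ ^ 2 - 1| ≤ 5 * l ^ 2 := by
    rw [abs_of_nonneg (by nlinarith)]
    have : σ ^ 2 - 1 = - s * (σ * (σ + 1)) := by linear_combination (σ + 1) * hσs
    rw [this]
    have h' : σ * (σ + 1) ≤ 5 := by nlinarith
    have : -s * (σ * (σ + 1)) ≤ l ^ 2 * 5 := mul_le_mul (by linarith) h' (by positivity) (by positivity)
    linarith
  have b5 : |σ ^ 3 - 1 + 3 * s| ≤ 5 * l ^ 3 := by
    have e : σ ^ 3 - 1 + 3 * s = s ^ 2 * (σ * (σ ^ 2 + 2 * σ + 3)) := by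
      have : σ ^ 3 - 1 = - s * (σ * (σ ^ 2 + σ + 1)) := by linear_combination (σ ^ 2 + σ + 1) * hσs
      linear_combination this - s * (σ ^ 2 + 2 * σ + 3) * hσs
    rw [e, abs_of_nonneg (by positivity)]
    have h'' : σ ^ 2 + 2 * σ + 3 ≤ 7.5 := by nlinarith
    have h' : σ * (σ ^ 2 + 2 * σ + 3) ≤ 4 / 3 * 7.5 := mul_le_mul hσ2 h'' (by positivity) (by positivity)
    have : s ^ 2 * (σ * (σ ^ 2 + 2 * σ + 3)) ≤ l ^ 3 / 2 * (4 / 3 * 7.5) := mul_le_mul hs2 h' (by positivity) (by positivity)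
    linarith
  have b6 : |σ ^ 2| ≤ 2 := by rw [abs_of_nonneg (by positivity)]; nlinarith
  have b7 : |σ ^ 3| ≤ 3 := by
    rw [abs_of_nonneg (by positivity)]
    have : σ ^ 2 ≤ 2 := by nlinarith
    nlinarith
  exact ⟨b0, b1, b2, b3, b4, b5, b6, b7⟩

lemma theta_real (dd s l j WW Wu uu WY Wy uY uy YY Yy yy : ℝ) (hdd : 0 ≤ dd) (hl0 : 0 < l) (hl : l ≤ 1 / 2)
    (hj : 1 ≤ j) (hs : -l ^ 2 < s) (hs' : s ≤ 0)
    (h1 : |WW| ≤ j) (h2 : |Wu| ≤ l * j) (h3 : |uu| ≤ l ^ 2 * j) (h4 : |WY| ≤ j) (h5 : |Wy| ≤ l ^ 3 * j)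
    (h6 : |uY| ≤ l * j) (h7 : |uy| ≤ l ^ 3 * j) (h8 : |YY| ≤ j) (h9 : |Yy| ≤ l ^ 3 * j)
    (h10 : |yy| ≤ l ^ 3 * j) :
    |-(2 * dd * Real.log (1 + s)) - ((1 + s)⁻¹ * (WW + Wu + uu)
      + 3 * (1 + s)⁻¹ ^ 2 * (WY - Wy + uY - uy) + 3 * (1 + s)⁻¹ ^ 3 * (YY - 2 * Yy + yy))
      + (WW + 3 * WY + 3 * YY)
      - (-(Wu + 3 * uY) + (- uu - 2 * dd * s + s * (WW + 6 * WY + 9 * YY)))| ≤ (2 * dd + 100) * l ^ 3 * j := by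
  obtain ⟨b0, b1, b2, b3, b4, b5, b6, b7⟩ := sigma_bds s l hl0 hl hs hs'
  have hl3 : 0 < l ^ 3 := by positivity
  set σ := (1 + s)⁻¹ with hσ
  have t0 : |2 * dd * (Real.log (1 + s) - s)| ≤ 2 * dd * l ^ 3 * j := by
    have : |2 * dd * (Real.log (1 + s) - s)| ≤ 2 * dd * l ^ 3 := by
      rw [abs_mul, abs_of_nonneg (by positivity : 0 ≤ 2 * dd)]
      gcongr
    refine this.trans ?_
    exact le_mul_of_one_le_right (by positivity) hj
  have t1 := abs_mul_le' b1 h1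
  have t2 := abs_mul_le' b2 h2
  have t3 := abs_mul_le' b2 h3
  have t4 := abs_mul_le' b3 h4
  have t5 := abs_mul_le' b6 h5
  have t6 := abs_mul_le' b4 h6
  have t7 := abs_mul_le' b6 h7
  have t8 := abs_mul_le' b5 h8
  have t9 := abs_mul_le' b7 h9
  have t10 := abs_mul_le' b7 h10
  have hlj : l ^ 4 * j ≤ l ^ 3 * j := by
    have : l ^ 4 ≤ l ^ 3 := pow_le_pow_of_le_one hl0.le (by linarith) (by norm_num)
    gcongr
  have hX : 0 < l ^ 3 * j := by positivity
  have e : -(2 * dd * Real.log (1 + s)) - (σ * (WW + Wu + uu)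
      + 3 * σ ^ 2 * (WY - Wy + uY - uy) + 3 * σ ^ 3 * (YY - 2 * Yy + yy))
      + (WW + 3 * WY + 3 * YY)
      - (-(Wu + 3 * uY) + (- uu - 2 * dd * s + s * (WW + 6 * WY + 9 * YY)))
      = -(2 * dd * (Real.log (1 + s) - s)) - (σ - 1 + s) * WW - (σ - 1) * Wu - (σ - 1) * uu
        - 3 * ((σ ^ 2 - 1 + 2 * s) * WY) + 3 * (σ ^ 2 * Wy) - 3 * ((σ ^ 2 - 1) * uY) + 3 * (σ ^ 2 * uy)
        - 3 * ((σ ^ 3 - 1 + 3 * s) * YY) + 6 * (σ ^ 3 * Yy) - 3 * (σ ^ 3 * yy) := by ring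
  rw [e]
  clear e b0 b1 b2 b3 b4 b5 b6 b7 h1 h2 h3 h4 h5 h6 h7 h8 h9 h10
  have e2 : 2 * l ^ 2 * (l * j) = 2 * (l ^ 3 * j) := by ring
  have e3 : 2 * l ^ 2 * (l ^ 2 * j) = 2 * (l ^ 4 * j) := by ring
  have e6 : 5 * l ^ 2 * (l * j) = 5 * (l ^ 3 * j) := by ring
  have e4 : 3 * l ^ 3 * j = 3 * (l ^ 3 * j) := by ring
  have e8 : 5 * l ^ 3 * j = 5 * (l ^ 3 * j) := by ring
  have e0 : 2 * dd * l ^ 3 * j = 2 * dd * (l ^ 3 * j) := by ring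
  have e9 : (2 * dd + 100) * l ^ 3 * j = 2 * dd * (l ^ 3 * j) + 100 * (l ^ 3 * j) := by ring
  rw [e2] at t2
  rw [e3] at t3
  rw [e6] at t6
  rw [e4] at t4
  rw [e8] at t8
  rw [e0] at t0
  rw [e9]
  exact sum_bd t0 t1 t2 (t3.trans (mul_le_mul_of_nonneg_left hlj (by norm_num))) t4 t5 t6 t7 t8 t9 t10 hX

lemma exp_real (D l j th p1 p2 : ℝ) (hD : 1 ≤ D) (hl0 : 0 < l) (hl : l ≤ 1) (hj : 1 ≤ j)
    (h1 : |p1| ≤ D * l * j) (h2 : |p2| ≤ D * l ^ 2 * j) (h3 : |th - (p1 + p2)| ≤ D * l ^ 3 * j) :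
    |Real.exp th - (1 + p1 + p2 + p1 ^ 2 / 2)| ≤ 40 * D ^ 3 * l ^ 3 * j ^ 3 * Real.exp (3 * D * l * j) := by
  have hl2 : l ^ 2 ≤ l := by nlinarith
  have hl3 : l ^ 3 ≤ l ^ 2 := pow_le_pow_of_le_one hl0.le hl (by norm_num)
  have m2 : D * l ^ 2 * j ≤ D * l * j := by gcongr
  have m3 : D * l ^ 3 * j ≤ D * l ^ 2 * j := by gcongr
  have hth : |th| ≤ 3 * D * l * j := by
    rw [abs_le] at *; constructor <;> linarith
  have hA : |Real.exp th - (1 + th + th ^ 2 / 2)| ≤ |th| ^ 3 * Real.exp |th| := by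
    have := Complex.norm_exp_sub_sum_le_norm_mul_exp (th : ℂ) 3
    have e : Complex.exp th - ∑ m ∈ Finset.range 3, (th : ℂ) ^ m / m.factorial
        = ((Real.exp th - (1 + th + th ^ 2 / 2) : ℝ) : ℂ) := by
      simp [Finset.sum_range_succ]
    rw [e, Complex.norm_real, Complex.norm_real] at this
    exact this
  have hA' : |th| ^ 3 * Real.exp |th| ≤ (3 * D * l * j) ^ 3 * Real.exp (3 * D * l * j) := by gcongr
  have hB : |(th - p1) * (th + p1)| ≤ (2 * (D * l ^ 2 * j)) * (4 * (D * l * j)) := by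
    apply abs_mul_le'
    · rw [abs_le] at *; constructor <;> linarith
    · rw [abs_le] at *; constructor <;> linarith
  have he : 1 ≤ Real.exp (3 * D * l * j) := Real.one_le_exp (by positivity)
  set e := Real.exp (3 * D * l * j)
  have hX : 0 ≤ D ^ 3 * l ^ 3 * j ^ 3 := by positivity
  have g1 : D * l ^ 3 * j ≤ D ^ 3 * l ^ 3 * j ^ 3 * e := by
    have a1 : D ≤ D ^ 3 := le_self_pow₀ hD (by norm_num)
    have a2 : j ≤ j ^ 3 := le_self_pow₀ hj (by norm_num)
    calc D * l ^ 3 * j ≤ D ^ 3 * l ^ 3 * j ^ 3 := by gcongr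
      _ ≤ _ := le_mul_of_one_le_right hX he
  have g2 : (2 * (D * l ^ 2 * j)) * (4 * (D * l * j)) ≤ 8 * (D ^ 3 * l ^ 3 * j ^ 3 * e) := by
    have a1 : D ^ 2 ≤ D ^ 3 := pow_le_pow_right₀ hD (by norm_num)
    have a2 : j ^ 2 ≤ j ^ 3 := pow_le_pow_right₀ hj (by norm_num)
    calc (2 * (D * l ^ 2 * j)) * (4 * (D * l * j)) = 8 * (D ^ 2 * l ^ 3 * j ^ 2) := by ring
      _ ≤ 8 * (D ^ 3 * l ^ 3 * j ^ 3) := by gcongr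
      _ ≤ _ := mul_le_mul_of_nonneg_left (le_mul_of_one_le_right hX he) (by norm_num)
  have g3 : (3 * D * l * j) ^ 3 * e = 27 * (D ^ 3 * l ^ 3 * j ^ 3 * e) := by ring
  have g4 : 0 ≤ D ^ 3 * l ^ 3 * j ^ 3 * e := by positivity
  rw [abs_le] at hA hB h3 ⊢
  constructor <;> nlinarith



/-- constant -/
def Dd (d : ℕ) : ℝ := 2 * d + 100

/-- second order kinetic Taylor polynomial of the kernel ratio -/
def tpoly (s : ℝ) (u A : E d) : ℝ :=
  1 + (- inner ℝ A u) + (-‖u‖ ^ 2 - 2 * d * s + s * ‖A‖ ^ 2) + (- inner ℝ A u) ^ 2 / 2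

lemma kernel_expand (s l : ℝ) (y u Y W : E d) (hl0 : 0 < l) (hl : l ≤ 1 / (48 * Dd d))
    (hs : -l ^ 2 < s) (hs' : s ≤ 0) (hy : ‖y‖ < l ^ 3) (hu : ‖u‖ < l) :
    |Real.exp (theta s y u Y W) - tpoly s u (W + (3:ℝ) • Y)| * rho (Y, W) ≤
      (40 * Dd d ^ 3 * Real.exp 1) * l ^ 3 * (JJ Y W ^ 3 * Real.exp (-(1/16) * JJ Y W)) := by
  have hd0 : (0:ℝ) ≤ d := by positivity
  have hD : 100 ≤ Dd d := by unfold Dd; linarith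
  have hlD : l * (48 * Dd d) ≤ 1 := by rwa [le_div_iff₀ (by positivity)] at hl
  have hl1 : l ≤ 1 / 2 := by nlinarith
  have hj := one_le_JJ Y W
  set j := JJ Y W with hjdef
  have hY0 := norm_nonneg Y
  have hW0 := norm_nonneg W
  have hy0 := norm_nonneg y
  have hu0 := norm_nonneg u
  have jY2 : ‖Y‖ ^ 2 ≤ j := by rw [hjdef]; unfold JJ; nlinarith [sq_nonneg ‖W‖]
  have jW2 : ‖W‖ ^ 2 ≤ j := by rw [hjdef]; unfold JJ; nlinarith [sq_nonneg ‖Y‖]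
  have jY : ‖Y‖ ≤ j := by rw [hjdef]; unfold JJ; nlinarith [sq_nonneg ‖W‖, sq_nonneg (‖Y‖ - 1), sq_nonneg ‖Y‖]
  have jW : ‖W‖ ≤ j := by rw [hjdef]; unfold JJ; nlinarith [sq_nonneg ‖Y‖, sq_nonneg (‖W‖ - 1), sq_nonneg ‖W‖]
  have jWY : ‖W‖ * ‖Y‖ ≤ j := by rw [hjdef]; unfold JJ; nlinarith [sq_nonneg (‖Y‖ - ‖W‖)]
  have hl3 : 0 < l ^ 3 := by positivity
  have hl31 : l ^ 3 ≤ 1 := pow_le_one₀ hl0.le (by linarith)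
  have hT : |theta s y u Y W - (-(inner ℝ W u + 3 * inner ℝ u Y) +
      (-‖u‖ ^ 2 - 2 * d * s + s * (‖W‖ ^ 2 + 6 * inner ℝ W Y + 9 * ‖Y‖ ^ 2)))| ≤ Dd d * l ^ 3 * j := by
    have := theta_real d s l j (‖W‖ ^ 2) (inner ℝ W u) (‖u‖ ^ 2) (inner ℝ W Y) (inner ℝ W y)
      (inner ℝ u Y) (inner ℝ u y) (‖Y‖ ^ 2) (inner ℝ Y y) (‖y‖ ^ 2) hd0 hl0 hl1 hj hs hs'
      ?_ ?_ ?_ ?_ ?_ ?_ ?_ ?_ ?_ ?_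
    · have e : theta s y u Y W = -(2 * d * Real.log (1 + s)) - ((1 + s)⁻¹ * (‖W‖ ^ 2 + inner ℝ W u + ‖u‖ ^ 2)
          + 3 * (1 + s)⁻¹ ^ 2 * (inner ℝ W Y - inner ℝ W y + inner ℝ u Y - inner ℝ u y)
          + 3 * (1 + s)⁻¹ ^ 3 * (‖Y‖ ^ 2 - 2 * inner ℝ Y y + ‖y‖ ^ 2))
          + (‖W‖ ^ 2 + 3 * inner ℝ W Y + 3 * ‖Y‖ ^ 2) := by
        unfold theta qf
        simp only [inner_add_left, inner_sub_right, norm_sub_sq_real]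
        ring
      rw [e]
      exact this
    · rw [abs_of_nonneg (by positivity)]; exact jW2
    · refine (abs_real_inner_le_norm _ _).trans ?_
      calc ‖W‖ * ‖u‖ ≤ j * l := by gcongr
        _ = _ := by ring
    · rw [abs_of_nonneg (by positivity)]
      calc ‖u‖ ^ 2 ≤ l ^ 2 := by gcongr
        _ ≤ _ := le_mul_of_one_le_right (by positivity) hj
    · exact (abs_real_inner_le_norm _ _).trans jWY
    · refine (abs_real_inner_le_norm _ _).trans ?_
      calc ‖W‖ * ‖y‖ ≤ j * l ^ 3 := by gcongr
        _ = _ := by ring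
    · refine (abs_real_inner_le_norm _ _).trans ?_
      exact mul_le_mul hu.le jY hY0 hl0.le
    · refine (abs_real_inner_le_norm _ _).trans ?_
      calc ‖u‖ * ‖y‖ ≤ 1 * l ^ 3 := mul_le_mul (by linarith) hy.le hy0 (by norm_num)
        _ ≤ j * l ^ 3 := by gcongr
        _ = _ := by ring
    · rw [abs_of_nonneg (by positivity)]; exact jY2
    · refine (abs_real_inner_le_norm _ _).trans ?_
      calc ‖Y‖ * ‖y‖ ≤ j * l ^ 3 := by gcongr
        _ = _ := by ring
    · rw [abs_of_nonneg (by positivity)]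
      calc ‖y‖ ^ 2 ≤ (l ^ 3) ^ 2 := by gcongr
        _ = l ^ 3 * l ^ 3 := by ring
        _ ≤ l ^ 3 * 1 := by gcongr
        _ ≤ _ := by gcongr
  have eA : inner ℝ (W + (3:ℝ) • Y) u = inner ℝ W u + 3 * inner ℝ u Y := by
    rw [inner_add_left, real_inner_smul_left, real_inner_comm u Y]
  have eA2 : ‖W + (3:ℝ) • Y‖ ^ 2 = ‖W‖ ^ 2 + 6 * inner ℝ W Y + 9 * ‖Y‖ ^ 2 := by
    rw [norm_add_sq_real, real_inner_smul_right, norm_smul, mul_pow]; norm_num; ring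
  have nA : ‖W + (3:ℝ) • Y‖ ≤ 4 * j := by
    refine (norm_add_le _ _).trans ?_
    rw [norm_smul]; norm_num; linarith
  have nA2 : ‖W + (3:ℝ) • Y‖ ^ 2 ≤ 16 * j := by
    rw [eA2]
    have := (abs_le.1 ((abs_real_inner_le_norm W Y).trans jWY)).2
    nlinarith
  set A := W + (3:ℝ) • Y with hA
  have p1 : |-inner ℝ A u| ≤ Dd d * l * j := by
    rw [abs_neg]
    refine (abs_real_inner_le_norm _ _).trans ?_
    calc ‖A‖ * ‖u‖ ≤ (4 * j) * l := by gcongr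
      _ = 4 * l * j := by ring
      _ ≤ Dd d * l * j := by gcongr; linarith
  have hl2 : 0 < l ^ 2 := by positivity
  have p2 : |-‖u‖ ^ 2 - 2 * d * s + s * ‖A‖ ^ 2| ≤ Dd d * l ^ 2 * j := by
    have a1 : ‖u‖ ^ 2 ≤ l ^ 2 := by gcongr
    have a1' : l ^ 2 ≤ l ^ 2 * j := le_mul_of_one_le_right hl2.le hj
    have a2 : -s * ‖A‖ ^ 2 ≤ l ^ 2 * (16 * j) := mul_le_mul (by linarith) nA2 (by positivity) hl2.le
    have a3 : 0 ≤ -s * ‖A‖ ^ 2 := mul_nonneg (by linarith) (by positivity)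
    have a4 : 2 * d * (-s) ≤ 2 * d * (l ^ 2 * j) := by gcongr; linarith
    have a5 : 0 ≤ 2 * d * (-s) := mul_nonneg (by positivity) (by linarith)
    have a6 : 0 ≤ ‖u‖ ^ 2 := by positivity
    have a7 : Dd d * l ^ 2 * j = 2 * d * (l ^ 2 * j) + 100 * (l ^ 2 * j) := by unfold Dd; ring
    rw [a7, abs_le]
    constructor <;> linarith
  rw [← eA, ← eA2] at hT
  have hE := exp_real (Dd d) l j _ _ _ (by linarith) hl0 (by linarith) hj p1 p2 hT
  have e1 : Real.exp (3 * Dd d * l * j) ≤ Real.exp ((1/16) * j) := by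
    apply Real.exp_le_exp.2
    nlinarith
  have hr : rho (Y, W) ≤ Real.exp 1 * Real.exp (-(1/8) * j) := rho_le (Y, W)
  have hD0 : 0 ≤ Dd d := by linarith
  calc |Real.exp (theta s y u Y W) - tpoly s u A| * rho (Y, W)
      ≤ (40 * Dd d ^ 3 * l ^ 3 * j ^ 3 * Real.exp (3 * Dd d * l * j)) * (Real.exp 1 * Real.exp (-(1/8) * j)) :=
        mul_le_mul hE hr (rho_pos _).le (by positivity)
    _ ≤ (40 * Dd d ^ 3 * l ^ 3 * j ^ 3 * Real.exp ((1/16) * j)) * (Real.exp 1 * Real.exp (-(1/8) * j)) := by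
        gcongr
    _ = (40 * Dd d ^ 3 * Real.exp 1) * l ^ 3 * (j ^ 3 * (Real.exp ((1/16) * j) * Real.exp (-(1/8) * j))) := by ring
    _ = _ := by
        rw [← Real.exp_add]
        congr 4
        ring

lemma cov (h : E d × E d → ℝ) (hc : Continuous h) (a b : ℝ) (ha : 0 < a) (hb : 0 < b) (x0 v0 : E d) :
    ∫ η : E d × E d, h (x0 + a • η.1, v0 + b • η.2) = ((a * b) ^ d)⁻¹ * ∫ η, h η := by
  set T : (E d × E d) →ₗ[ℝ] (E d × E d) :=
    LinearMap.prodMap (a • LinearMap.id) (b • LinearMap.id) with hT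
  have hdet : LinearMap.det T = (a * b) ^ d := by
    rw [hT, LinearMap.det_prodMap, LinearMap.det_smul, LinearMap.det_smul]
    simp [mul_pow]
  have hdet0 : LinearMap.det T ≠ 0 := by rw [hdet]; positivity
  have : (volume : Measure (E d × E d)).IsAddHaarMeasure :=
    inferInstanceAs ((volume : Measure (E d)).prod volume).IsAddHaarMeasure
  have hm := Measure.map_linearMap_addHaar_eq_smul_addHaar (volume : Measure (E d × E d)) hdet0
  have hTc : Continuous T := T.continuous_of_finiteDimensional
  have e1 : ∫ η : E d × E d, h (x0 + a • η.1, v0 + b • η.2) = ∫ η, (fun p => h ((x0, v0) + p)) (T η) := by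
    refine integral_congr_ae (Eventually.of_forall fun η => ?_)
    simp [hT, LinearMap.prodMap_apply]
  have e2 := integral_map (μ := (volume : Measure (E d × E d))) hTc.aemeasurable
    (f := fun p => h ((x0, v0) + p)) (Continuous.aestronglyMeasurable (by fun_prop))
  rw [e1, ← e2, hm,
    integral_smul_measure, integral_add_left_eq_self (fun p => h p) ((x0, v0) : E d × E d), hdet]
  rw [ENNReal.toReal_ofReal (abs_nonneg _), abs_of_pos (by positivity), smul_eq_mul]

/-- Solution of the homogeneous Kolmogorov equation with data `f` at time `-1`. -/
def FF (f : E d × E d → ℝ) (z : Z d) : ℝ :=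
  (c0 d)⁻¹ * ∫ η : E d × E d,
    f (z.2.1 - (z.1 + 1) • z.2.2 + ((z.1 + 1) * √(z.1 + 1)) • η.1, z.2.2 + √(z.1 + 1) • η.2) * rho η

lemma FF_eq (f : E d × E d → ℝ) (hf : Continuous f) (s : ℝ) (y u : E d) (hs : -1 < s) :
    FF f (s, y, u) = (c0 d)⁻¹ * ∫ η : E d × E d, f η * (Real.exp (theta s y u η.1 η.2) * rho η) := by
  have hp : 0 < 1 + s := by linarith
  have hb : 0 < √(1 + s) := Real.sqrt_pos.2 hp
  have hbb : √(1 + s) * √(1 + s) = 1 + s := Real.mul_self_sqrt hp.le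
  set b := √(1 + s) with hbd
  have ha : 0 < (1 + s) * b := by positivity
  set a := (1 + s) * b with had
  unfold FF
  congr 1
  have hcont : Continuous (fun η : E d × E d => f η * rho (a⁻¹ • (η.1 - (y - (1 + s) • u)), b⁻¹ • (η.2 - u))) := by
    have := continuous_rho (d := d)
    fun_prop
  have := cov _ hcont a b ha hb (y - (1 + s) • u) u
  have e1 : ∀ w : E d, a⁻¹ • a • w = w := fun w => inv_smul_smul₀ ha.ne' w
  have e2 : ∀ w : E d, b⁻¹ • b • w = w := fun w => inv_smul_smul₀ hb.ne' w
  simp only [add_sub_cancel_left, e1, e2] at this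
  have e3 : s + 1 = 1 + s := add_comm _ _
  simp only [e3, ← hbd, ← had]
  rw [this, ← integral_const_mul]
  refine integral_congr_ae (Eventually.of_forall fun η => ?_)
  obtain ⟨Y, W⟩ := η
  dsimp only
  have hlog : ((a * b) ^ d)⁻¹ = Real.exp (-(2 * d * Real.log (1 + s))) := by
    have : a * b = (1 + s) ^ 2 := by rw [had]; linear_combination (1 + s) * hbb
    rw [this, Real.exp_neg, ← pow_mul]
    congr 1
    rw [← Real.exp_log (pow_pos hp (2 * d)), Real.log_pow]
    push_cast; rfl
  rw [hlog]
  have key : Real.exp (-(2 * d * Real.log (1 + s))) * rho (a⁻¹ • (Y - (y - (1 + s) • u)), b⁻¹ • (W - u))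
      = Real.exp (theta s y u Y W) * rho (Y, W) := by
    unfold rho
    rw [← Real.exp_add, ← Real.exp_add]
    congr 1
    unfold theta
    have hvec : Y - (y - (1 + s) • u) = (Y - y) + (1 + s) • u := by module
    have hq : qf (a⁻¹ • (Y - (y - (1 + s) • u)), b⁻¹ • (W - u)) =
        (1 + s)⁻¹ * (‖W‖ ^ 2 + inner ℝ W u + ‖u‖ ^ 2)
    + 3 * (1 + s)⁻¹ ^ 2 * inner ℝ (W + u) (Y - y) + 3 * (1 + s)⁻¹ ^ 3 * ‖Y - y‖ ^ 2 := by
      rw [hvec]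
      set P := Y - y
      unfold qf
      simp only [norm_smul, mul_pow, norm_inv, Real.norm_eq_abs, inv_pow, sq_abs,
        real_inner_smul_left, real_inner_smul_right, norm_sub_sq_real, norm_add_sq_real,
        inner_add_left, inner_sub_left, inner_add_right, real_inner_self_eq_norm_sq]
      rw [real_inner_comm P u]
      have hb2 : b ^ 2 = 1 + s := by rw [sq, hbb]
      have ha2 : a ^ 2 = (1 + s) ^ 3 := by rw [had, mul_pow, hb2]; ring
      have hab : b⁻¹ * a⁻¹ = ((1 + s) ^ 2)⁻¹ := by
        rw [← mul_inv]; congr 1; rw [had]; linear_combination (1 + s) * hbb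
      rw [hb2, ha2]
      have h2 : a⁻¹ * (b⁻¹ * (inner ℝ W P - inner ℝ P u) + (1 + s) * (b⁻¹ * (inner ℝ W u - ‖u‖ ^ 2)))
          = ((1 + s) ^ 2)⁻¹ * ((inner ℝ W P - inner ℝ P u) + (1 + s) * (inner ℝ W u - ‖u‖ ^ 2)) := by
        rw [← hab]; ring
      rw [h2]
      field_simp
      ring
    rw [hq]; ring
  rw [← key]; ring


/-- twice the Kronecker delta -/
def dl (i j : Fin d) : ℝ := if i = j then 2 else 0

lemma tpoly_kpoly (s : ℝ) (y u A : E d) :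
    tpoly s u A = kpoly 1 (∑ i, (A i * A i - dl i i)) (fun i => - A i)
      (fun i j => A i * A j - dl i j) (s, y, u) := by
  have e1 : inner ℝ A u = ∑ i, A i * u i := by
    simp [PiLp.inner_apply, mul_comm]
  have e2 : ‖A‖ ^ 2 = ∑ i, A i * A i := by
    rw [EuclideanSpace.real_norm_sq_eq]; exact Finset.sum_congr rfl fun i _ => by ring
  have e3 : ‖u‖ ^ 2 = ∑ i, u i * u i := by
    rw [EuclideanSpace.real_norm_sq_eq]; exact Finset.sum_congr rfl fun i _ => by ring
  have e4 : ∑ i, ∑ j, (A i * A j - if i = j then 2 else 0) * u i * u j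
      = (∑ i, A i * u i) ^ 2 - 2 * ∑ i, u i * u i := by
    rw [sq, Finset.sum_mul_sum, Finset.mul_sum, ← Finset.sum_sub_distrib]
    refine Finset.sum_congr rfl fun i _ => ?_
    have : ∀ j, (A i * A j - if i = j then 2 else 0) * u i * u j
      = A i * u i * (A j * u j) - if i = j then 2 * (u i * u j) else 0 := by
      intro j; split_ifs <;> ring
    simp only [this, Finset.sum_sub_distrib, Finset.sum_ite_eq, Finset.mem_univ, if_true]
  unfold tpoly kpoly dl
  simp only [e4, if_true, Finset.sum_sub_distrib, Finset.sum_const, Finset.card_univ, Fintype.card_fin,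
    neg_mul, Finset.sum_neg_distrib, e1, e2, e3, nsmul_eq_mul]
  ring

lemma kpoly_integral {X : Type*} [MeasurableSpace X] {μ : Measure X} (a b : X → ℝ) (q : X → Fin d → ℝ)
    (M : X → Matrix (Fin d) (Fin d) ℝ) (ha : Integrable a μ) (hb : Integrable b μ)
    (hq : ∀ i, Integrable (fun x => q x i) μ) (hM : ∀ i j, Integrable (fun x => M x i j) μ) (ζ : Z d) :
    Integrable (fun x => kpoly (a x) (b x) (q x) (M x) ζ) μ ∧
    ∫ x, kpoly (a x) (b x) (q x) (M x) ζ ∂μ =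
      kpoly (∫ x, a x ∂μ) (∫ x, b x ∂μ) (fun i => ∫ x, q x i ∂μ) (fun i j => ∫ x, M x i j ∂μ) ζ := by
  have i1 : Integrable (fun x => ∑ i, q x i * ζ.2.2 i) μ :=
    integrable_finsetSum _ fun i _ => (hq i).mul_const _
  have i2 : ∀ i, Integrable (fun x => ∑ j, M x i j * ζ.2.2 i * ζ.2.2 j) μ := fun i =>
    integrable_finsetSum _ fun j _ => ((hM i j).mul_const _).mul_const _
  have i3 : Integrable (fun x => ∑ i, ∑ j, M x i j * ζ.2.2 i * ζ.2.2 j) μ :=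
    integrable_finsetSum _ fun i _ => i2 i
  have i4 : Integrable (fun x => a x + b x * ζ.1) μ := ha.add (hb.mul_const _)
  have i5 : Integrable (fun x => a x + b x * ζ.1 + ∑ i, q x i * ζ.2.2 i) μ := i4.add i1
  have i6 := i3.const_mul (1/2)
  unfold kpoly
  refine ⟨i5.add i6, ?_⟩
  rw [integral_add i5 i6, integral_add i4 i1, integral_add ha (hb.mul_const _), integral_mul_const,
    integral_const_mul, integral_finsetSum _ (fun i _ => (hq i).mul_const _),
    integral_finsetSum _ (fun i _ => i2 i)]
  congr 1
  · congr 1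
    exact Finset.sum_congr rfl fun i _ => integral_mul_const _ _
  · congr 1
    refine Finset.sum_congr rfl fun i _ => ?_
    rw [integral_finsetSum _ (fun j _ => ((hM i j).mul_const _).mul_const _)]
    exact Finset.sum_congr rfl fun j _ => by rw [integral_mul_const, integral_mul_const]

lemma kpoly_smul (c a b : ℝ) (q : Fin d → ℝ) (M : Matrix (Fin d) (Fin d) ℝ) (ζ : Z d) :
    c * kpoly a b q M ζ = kpoly (c * a) (c * b) (fun i => c * q i) (fun i j => c * M i j) ζ := by
  unfold kpoly
  simp only [mul_assoc, ← Finset.mul_sum]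
  ring

/-- constant in the expansion lemma -/
def CE (d : ℕ) : ℝ := (c0 d)⁻¹ * ((40 * Dd d ^ 3 * Real.exp 1) *
  ∫ η : E d × E d, JJ η.1 η.2 ^ 5 * Real.exp (-(1/16) * JJ η.1 η.2))

lemma CE_nonneg : 0 ≤ CE d := by
  unfold CE
  have := c0_pos (d := d)
  have h2 : 0 ≤ Dd d := by unfold Dd; positivity
  have h3 : 0 ≤ ∫ η : E d × E d, JJ η.1 η.2 ^ 5 * Real.exp (-(1/16) * JJ η.1 η.2) :=
    integral_nonneg fun η => by have := one_le_JJ η.1 η.2; positivity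
  positivity

lemma FF_expand (f : E d × E d → ℝ) (hf : Continuous f) (M : ℝ)
    (hM : ∀ η, |f η| ≤ M * JJ η.1 η.2 ^ 2) :
    ∃ (a : ℝ) (q : Fin d → ℝ) (Mx : Matrix (Fin d) (Fin d) ℝ), ∀ l, 0 < l → l ≤ 1 / (48 * Dd d) →
      ∀ ζ ∈ kCyl l (0 : Z d), |FF f ζ - kpoly a (∑ i, Mx i i) q Mx ζ| ≤ CE d * M * l ^ 3 := by
  set Av : E d × E d → E d := fun η => η.2 + (3:ℝ) • η.1 with hAv
  have hAc : ∀ i, Continuous (fun η => Av η i) := fun i => by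
    rw [hAv]
    have : Continuous (fun η : E d × E d => η.2 + (3:ℝ) • η.1) := by fun_prop
    fun_prop
  have hM0 : 0 ≤ M := by
    have := (abs_nonneg _).trans (hM 0)
    have h1 := one_le_JJ (0 : E d) 0
    by_contra h
    push Not at h
    have : M * JJ (0 : E d) 0 ^ 2 < 0 := mul_neg_of_neg_of_pos h (by positivity)
    exact absurd ((abs_nonneg _).trans (hM 0)) (not_le.2 this)
  have hAb : ∀ η i, |Av η i| ≤ 4 * JJ η.1 η.2 := by
    intro η i
    have h1 : |Av η i| ≤ ‖Av η‖ := PiLp.norm_apply_le (Av η) i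
    have h2 : ‖Av η‖ ≤ ‖η.2‖ + 3 * ‖η.1‖ := by
      rw [hAv]; refine (norm_add_le _ _).trans ?_; rw [norm_smul]; norm_num
    have h3 : ‖η.2‖ + 3 * ‖η.1‖ ≤ 4 * JJ η.1 η.2 := by
      unfold JJ; nlinarith [sq_nonneg (‖η.1‖ - 1), sq_nonneg (‖η.2‖ - 1), sq_nonneg ‖η.1‖, sq_nonneg ‖η.2‖]
    linarith
  have hmul : ∀ (h : E d × E d → ℝ) (C : ℝ), Continuous h → 0 ≤ C → (∀ η, |h η| ≤ C * JJ η.1 η.2 ^ 2) →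
      Integrable (fun η => f η * rho η * h η) := by
    intro h C hc hC hb
    have := integrable_of_bd (h := fun η => f η * h η) (hf.mul hc) (M * C) 4 (fun η => by
      have := abs_mul_le' (hM η) (hb η)
      refine this.trans (le_of_eq ?_); ring)
    refine this.congr (Eventually.of_forall fun η => ?_)
    simp only; ring
  have I0 : Integrable (fun η => f η * rho η * 1) := hmul (fun _ => 1) 1 continuous_const zero_le_one (fun η => by
    have := one_le_JJ η.1 η.2
    rw [abs_one, one_mul]; exact one_le_pow₀ this)
  have I1 : ∀ i, Integrable (fun η => f η * rho η * (- Av η i)) := fun i => hmul _ 4 (hAc i).neg (by norm_num) (fun η => by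
    have := one_le_JJ η.1 η.2
    rw [abs_neg]; refine (hAb η i).trans ?_
    nlinarith)
  have I2 : ∀ i j, Integrable (fun η => f η * rho η * (Av η i * Av η j - dl i j)) :=
    fun i j => hmul _ 18 (((hAc i).mul (hAc j)).sub continuous_const) (by norm_num) (fun η => by
    have h1 := one_le_JJ η.1 η.2
    have h2 := abs_mul_le' (hAb η i) (hAb η j)
    have h3 : |dl i j| ≤ 2 := by unfold dl; split_ifs <;> norm_num
    refine (abs_sub _ _).trans ?_
    nlinarith)
  have I3 : Integrable (fun η => f η * rho η * ∑ i, (Av η i * Av η i - dl i i)) := by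
    simp only [Finset.mul_sum]
    exact integrable_finsetSum _ fun i _ => I2 i i
  set κ := (c0 d)⁻¹ with hκ
  have hκ0 : 0 < κ := inv_pos.2 c0_pos
  refine ⟨κ * ∫ η, f η * rho η * 1, fun i => κ * ∫ η, f η * rho η * (- Av η i),
    fun i j => κ * ∫ η, f η * rho η * (Av η i * Av η j - dl i j), ?_⟩
  rintro l hl0 hl ⟨s, y, u⟩ hζ
  simp only [kCyl, Set.mem_ofPred_eq, Prod.fst_zero, Prod.snd_zero, sub_zero, smul_zero, zero_sub] at hζ
  obtain ⟨hs, hs', hy, hu⟩ := hζ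
  have hd0 : (0:ℝ) ≤ d := by positivity
  have hD : 100 ≤ Dd d := by unfold Dd; linarith
  have hlD : l * (48 * Dd d) ≤ 1 := by rwa [le_div_iff₀ (by positivity)] at hl
  have hl1 : l ≤ 1 / 2 := by nlinarith
  have hs1 : -1 < s := by nlinarith
  rw [FF_eq f hf s y u hs1]
  obtain ⟨J1, J2⟩ := kpoly_integral (fun η => f η * rho η * 1)
    (fun η => f η * rho η * ∑ i, (Av η i * Av η i - dl i i))
    (fun η i => f η * rho η * (- Av η i))
    (fun η i j => f η * rho η * (Av η i * Av η j - dl i j)) I0 I3 I1 I2 (s, y, u)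
  have eb : ∑ i, (κ * ∫ η, f η * rho η * (Av η i * Av η i - dl i i)) =
      κ * ∫ η, f η * rho η * ∑ i, (Av η i * Av η i - dl i i) := by
    rw [← Finset.mul_sum]
    congr 1
    simp only [Finset.mul_sum]
    exact (integral_finsetSum _ fun i _ => I2 i i).symm
  rw [eb]
  have ekp := kpoly_smul κ (∫ η, f η * rho η * 1) (∫ η, f η * rho η * ∑ i, (Av η i * Av η i - dl i i))
    (fun i => ∫ η, f η * rho η * (- Av η i)) (fun i j => ∫ η, f η * rho η * (Av η i * Av η j - dl i j)) (s, y, u)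
  refine le_of_eq_of_le (congrArg (fun X => |_ - X|) ekp.symm) ?_
  refine le_of_eq_of_le (congrArg (fun X => |_ - κ * X|) J2.symm) ?_
  rw [← mul_sub]
  have ek : ∀ η : E d × E d, kpoly (f η * rho η * 1) (f η * rho η * ∑ i, (Av η i * Av η i - dl i i))
    (fun i => f η * rho η * (- Av η i)) (fun i j => f η * rho η * (Av η i * Av η j - dl i j)) (s, y, u)
      = f η * rho η * tpoly s u (Av η) := by
    intro η
    rw [tpoly_kpoly s y u]
    exact (kpoly_smul (f η * rho η) _ _ _ _ _).symm
  have hdiff : ∀ η : E d × E d, ‖f η * (Real.exp (theta s y u η.1 η.2) * rho η) -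
      kpoly (f η * rho η * 1) (f η * rho η * ∑ i, (Av η i * Av η i - dl i i))
    (fun i => f η * rho η * (- Av η i)) (fun i j => f η * rho η * (Av η i * Av η j - dl i j)) (s, y, u)‖
      ≤ (M * ((40 * Dd d ^ 3 * Real.exp 1) * l ^ 3)) * (JJ η.1 η.2 ^ 5 * Real.exp (-(1/16) * JJ η.1 η.2)) := by
    rintro ⟨Y, W⟩
    rw [Real.norm_eq_abs, ek]
    have h1 := kernel_expand s l y u Y W hl0 hl hs hs' hy hu
    have h2 := hM (Y, W)
    have e : f (Y, W) * (Real.exp (theta s y u Y W) * rho (Y, W)) - f (Y, W) * rho (Y, W) * tpoly s u (Av (Y, W))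
       = f (Y, W) * ((Real.exp (theta s y u Y W) - tpoly s u (W + (3:ℝ) • Y)) * rho (Y, W)) := by
      rw [hAv]; ring
    simp only [e]
    rw [← abs_of_pos (rho_pos (Y, W)), ← abs_mul] at h1
    refine (abs_mul_le' h2 h1).trans (le_of_eq ?_)
    ring
  have hint := (integrable_pow_gau (d := d) (c := 1/16) (by norm_num) 5).const_mul
    (M * ((40 * Dd d ^ 3 * Real.exp 1) * l ^ 3))
  have hI : Integrable (fun η : E d × E d => f η * (Real.exp (theta s y u η.1 η.2) * rho η) -
      kpoly (f η * rho η * 1) (f η * rho η * ∑ i, (Av η i * Av η i - dl i i))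
    (fun i => f η * rho η * (- Av η i)) (fun i j => f η * rho η * (Av η i * Av η j - dl i j)) (s, y, u)) := by
    refine hint.mono' (AEStronglyMeasurable.sub ?_ J1.aestronglyMeasurable) (Eventually.of_forall hdiff)
    have := continuous_rho (d := d)
    have h2 : Continuous (fun η : E d × E d => theta s y u η.1 η.2) := by
      unfold theta qf; fun_prop
    exact Continuous.aestronglyMeasurable (by fun_prop)
  have hI2 : Integrable (fun η : E d × E d => f η * (Real.exp (theta s y u η.1 η.2) * rho η)) := by
    refine (hI.add J1).congr (Eventually.of_forall fun η => ?_)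
    simp
  rw [← integral_sub hI2 J1, abs_mul, abs_of_pos hκ0]
  have := norm_integral_le_of_norm_le hint (Eventually.of_forall hdiff)
  rw [integral_const_mul, Real.norm_eq_abs] at this
  calc _ ≤ κ * _ := mul_le_mul_of_nonneg_left this hκ0.le
    _ = CE d * M * l ^ 3 := by unfold CE; ring


lemma kpoly_single (a b : ℝ) (q : Fin d → ℝ) (M : Matrix (Fin d) (Fin d) ℝ) (s : ℝ) (i : Fin d) :
    kpoly a b q M (0, 0, s • EuclideanSpace.single i (1:ℝ)) = a + q i * s + (1 / 2) * (M i i * s ^ 2) := by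
  unfold kpoly
  simp [PiLp.single_apply, Finset.sum_ite_eq]
  ring

lemma kpoly_time (a b : ℝ) (q : Fin d → ℝ) (M : Matrix (Fin d) (Fin d) ℝ) (s : ℝ) :
    kpoly a b q M (s, 0, 0) = a + b * s := by
  unfold kpoly
  simp

lemma hasL_of_expand (φ : Z d → ℝ) (C δ : ℝ) (hδ : 0 < δ) (a β : ℝ) (q : Fin d → ℝ)
    (M : Matrix (Fin d) (Fin d) ℝ)
    (h : ∀ l, 0 < l → l ≤ δ → ∀ ζ ∈ kCyl l (0 : Z d), |φ ζ - kpoly a β q M ζ| ≤ C * l ^ 3) :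
    HasL φ 0 (β - ∑ i, M i i) := by
  have h0 : φ 0 = a := by
    have h1 : ∀ᶠ l : ℝ in 𝓝[>] 0, |φ 0 - a| ≤ C * l ^ 3 := by
      filter_upwards [Ioc_mem_nhdsGT hδ] with l hl
      have := h l hl.1 hl.2 0 (by
        have := hl.1
        simp only [kCyl, Set.mem_ofPred_eq]
        simp only [Prod.fst_zero, Prod.snd_zero, sub_zero, smul_zero, norm_zero, zero_sub]
        refine ⟨by nlinarith, le_refl _, by positivity, by positivity⟩)
      have e : kpoly a β q M 0 = a := by
        have := kpoly_time a β q M 0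
        rw [mul_zero, add_zero] at this
        exact this
      rwa [e] at this
    have h2 : Tendsto (fun l : ℝ => C * l ^ 3) (𝓝[>] 0) (𝓝 0) := by
      have : Continuous (fun l : ℝ => C * l ^ 3) := by fun_prop
      have := this.tendsto 0
      simp only [ne_eq, OfNat.ofNat_ne_zero, not_false_eq_true, zero_pow, mul_zero] at this
      exact this.mono_left nhdsWithin_le_nhds
    have := ge_of_tendsto h2 h1
    have := abs_nonpos_iff.1 this
    linarith
  refine ⟨β, fun i => M i i, ?_, ?_, rfl⟩
  · rw [tendsto_iff_norm_sub_tendsto_zero]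
    refine squeeze_zero' (g := fun s : ℝ => 8 * C * √s) (Eventually.of_forall fun s => norm_nonneg _) ?_ ?_
    · filter_upwards [Ioc_mem_nhdsGT (show (0:ℝ) < δ ^ 2 / 4 by positivity)] with s hs
      obtain ⟨hs0, hs1⟩ := hs
      have hq : 0 < √s := Real.sqrt_pos.2 hs0
      have hqq : √s ^ 2 = s := Real.sq_sqrt hs0.le
      have := h (2 * √s) (by positivity) (by
        have : √s ≤ δ / 2 := Real.sqrt_le_iff.2 ⟨by positivity, by linarith [show (δ/2)^2 = δ^2/4 by ring]⟩
        linarith) (-s, 0, 0) (by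
        simp only [kCyl, Set.mem_ofPred_eq]
        simp only [Prod.fst_zero, Prod.snd_zero, sub_zero, smul_zero, norm_zero, zero_sub]
        refine ⟨by nlinarith, by linarith, by positivity, by positivity⟩)
      rw [kpoly_time] at this
      simp only [Prod.fst_zero, Prod.snd_zero, smul_zero, sub_zero, zero_sub, h0, Real.norm_eq_abs]
      have e : (φ (-s, 0, 0) - a) / s - -β = (φ (-s, 0, 0) - (a + β * -s)) / s := by
        field_simp; ring
      rw [e, abs_div, abs_of_pos hs0, div_le_iff₀ hs0]
      refine this.trans (le_of_eq ?_)
      calc C * (2 * √s) ^ 3 = 8 * C * √s * (√s ^ 2) := by ring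
        _ = _ := by rw [hqq]
    · have : Continuous (fun s : ℝ => 8 * C * √s) := by fun_prop
      have := this.tendsto 0
      simp only [Real.sqrt_zero, mul_zero] at this
      exact this.mono_left nhdsWithin_le_nhds
  · intro i
    rw [tendsto_iff_norm_sub_tendsto_zero]
    refine squeeze_zero' (g := fun s : ℝ => 16 * C * s) (Eventually.of_forall fun s => norm_nonneg _) ?_ ?_
    · filter_upwards [Ioc_mem_nhdsGT (show (0:ℝ) < δ / 2 by positivity)] with s hs
      obtain ⟨hs0, hs1⟩ := hs
      have key : ∀ s', |s'| = s → |φ (0, 0, s' • EuclideanSpace.single i (1:ℝ)) -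
          (a + q i * s' + (1 / 2) * (M i i * s' ^ 2))| ≤ C * (2 * s) ^ 3 := by
        intro s' hs'
        have := h (2 * s) (by positivity) (by linarith) (0, 0, s' • EuclideanSpace.single i (1:ℝ)) (by
          simp only [kCyl, Set.mem_ofPred_eq]
          simp only [Prod.fst_zero, Prod.snd_zero, sub_zero, smul_zero, norm_zero, zero_sub]
          refine ⟨by nlinarith, le_refl _, by positivity, ?_⟩
          rw [norm_smul, Real.norm_eq_abs, hs']
          simp; linarith)
        rwa [kpoly_single] at this
      have k1 := key s (abs_of_pos hs0)
      have k2 := key (-s) (by rw [abs_neg, abs_of_pos hs0])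
      simp only [Prod.fst_zero, Prod.snd_zero, zero_add, zero_sub, h0, Real.norm_eq_abs, ← neg_smul]
      set A := φ (0, 0, s • EuclideanSpace.single i (1:ℝ))
      set B := φ (0, 0, (-s) • EuclideanSpace.single i (1:ℝ))
      have e : (A + B - 2 * a) / s ^ 2 - M i i = (A + B - 2 * a - M i i * s ^ 2) / s ^ 2 := by
        field_simp
      rw [e, abs_div, abs_of_pos (show 0 < s ^ 2 by positivity), div_le_iff₀ (by positivity)]
      rw [abs_le] at *
      constructor <;> nlinarith
    · have : Continuous (fun s : ℝ => 16 * C * s) := by fun_prop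
      have := this.tendsto 0
      simp only [mul_zero] at this
      exact this.mono_left nhdsWithin_le_nhds

lemma tendsto_div_pos {c : ℝ} (hc : 0 < c) : Tendsto (fun s : ℝ => s / c) (𝓝[>] 0) (𝓝[>] 0) := by
  refine tendsto_nhdsWithin_iff.2 ⟨?_, ?_⟩
  · have : Continuous (fun s : ℝ => s / c) := by fun_prop
    have := this.tendsto 0
    simp only [zero_div] at this
    exact this.mono_left nhdsWithin_le_nhds
  · filter_upwards [self_mem_nhdsWithin] with s hs
    have : (0:ℝ) < s := hs
    exact div_pos this hc

lemma hasL_unscale (w φ : Z d → ℝ) (z : Z d) (σ ℓ : ℝ) (hσ : 0 < σ)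
    (h1 : ∀ s, 0 < s → s < 1 / 2 → w (z.1 - σ ^ 2 * s, z.2.1 - (σ ^ 2 * s) • z.2.2, z.2.2) = φ (-s, 0, 0))
    (h2 : ∀ u, w (z.1, z.2.1, z.2.2 + σ • u) = φ (0, 0, u)) (h : HasL φ 0 ℓ) :
    HasL w z (ℓ / σ ^ 2) := by
  obtain ⟨b, m, a1, a2, a3⟩ := h
  have h0 : w z = φ 0 := by
    have := h2 0
    rw [smul_zero, add_zero] at this
    exact this
  refine ⟨b / σ ^ 2, fun i => m i / σ ^ 2, ?_, ?_, ?_⟩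
  · have := (a1.comp (tendsto_div_pos (show 0 < σ ^ 2 by positivity))).div_const (σ ^ 2)
    rw [neg_div] at this
    refine this.congr' ?_
    filter_upwards [Ioo_mem_nhdsGT (show (0:ℝ) < σ ^ 2 * (1/2) by positivity)] with s hs
    have e := h1 (s / σ ^ 2) (div_pos hs.1 (by positivity)) (by
      rw [div_lt_iff₀ (by positivity)]; linarith [hs.2])
    have e2 : σ ^ 2 * (s / σ ^ 2) = s := by field_simp
    rw [e2] at e
    simp only [Function.comp, Prod.fst_zero, Prod.snd_zero, smul_zero, sub_zero, zero_sub]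
    rw [e, h0]
    have := hs.1
    field_simp
  · intro i
    have := ((a2 i).comp (tendsto_div_pos hσ)).div_const (σ ^ 2)
    refine this.congr' ?_
    filter_upwards [self_mem_nhdsWithin] with s hs
    have hs' : (0:ℝ) < s := hs
    simp only [Function.comp, Prod.fst_zero, Prod.snd_zero, zero_sub, zero_add]
    rw [← h2, ← neg_smul, ← h2, h0, smul_smul, smul_smul]
    have e2 : σ * (s / σ) = s := by field_simp
    have e3 : σ * (-(s / σ)) = -s := by field_simp
    rw [e2, e3, neg_smul, ← sub_eq_add_neg]
    field_simp
  · rw [a3, ← Finset.sum_div]; ring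

lemma JJ_affine (x0 v0 ξ ω : E d) (a b : ℝ) :
    JJ (x0 + a • ξ) (v0 + b • ω) ≤ 2 * (JJ x0 v0 + a ^ 2 + b ^ 2) * JJ ξ ω := by
  have h : ∀ (p r : E d) (c : ℝ), ‖p + c • r‖ ^ 2 ≤ 2 * ‖p‖ ^ 2 + 2 * (c ^ 2 * ‖r‖ ^ 2) := by
    intro p r c
    have h1 : ‖p + c • r‖ ≤ ‖p‖ + |c| * ‖r‖ := (norm_add_le _ _).trans (by rw [norm_smul, Real.norm_eq_abs])
    have h2 : c ^ 2 * ‖r‖ ^ 2 = (|c| * ‖r‖) ^ 2 := by rw [mul_pow, sq_abs]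
    rw [h2]
    calc ‖p + c • r‖ ^ 2 ≤ (‖p‖ + |c| * ‖r‖) ^ 2 := by gcongr
      _ ≤ _ := by nlinarith [sq_nonneg (‖p‖ - |c| * ‖r‖)]
  have h1 := h x0 ξ a
  have h2 := h v0 ω b
  unfold JJ
  have p1 : 0 ≤ ‖x0‖ ^ 2 * ‖ξ‖ ^ 2 := by positivity
  have p2 : 0 ≤ ‖x0‖ ^ 2 * ‖ω‖ ^ 2 := by positivity
  have p3 : 0 ≤ ‖v0‖ ^ 2 * ‖ξ‖ ^ 2 := by positivity
  have p4 : 0 ≤ ‖v0‖ ^ 2 * ‖ω‖ ^ 2 := by positivity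
  have p5 : 0 ≤ a ^ 2 * ‖ω‖ ^ 2 := by positivity
  have p6 : 0 ≤ b ^ 2 * ‖ξ‖ ^ 2 := by positivity
  have p7 : 0 ≤ a ^ 2 := by positivity
  have p8 : 0 ≤ b ^ 2 := by positivity
  have p9 : 0 ≤ ‖ξ‖ ^ 2 := by positivity
  have p10 : 0 ≤ ‖ω‖ ^ 2 := by positivity
  nlinarith

lemma FF_scale (f : E d × E d → ℝ) (z : Z d) (τ σ : ℝ) (hτ : z.1 + 1 = τ) (hσ0 : 0 < σ) (hσ : σ ^ 2 = τ)
    (s : ℝ) (y u : E d) (hs : -1 ≤ s) :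
    FF f (z.1 + τ * s, z.2.1 + (τ * σ) • y + (τ * s) • z.2.2, z.2.2 + σ • u) =
    FF (fun η => f (z.2.1 - τ • z.2.2 + (τ * σ) • η.1, z.2.2 + σ • η.2)) (s, y, u) := by
  have hτ0 : 0 < τ := by rw [← hσ]; positivity
  unfold FF
  have e1 : z.1 + τ * s + 1 = τ * (1 + s) := by rw [← hτ]; ring
  have e2 : √(τ * (1 + s)) = σ * √(s + 1) := by
    rw [Real.sqrt_mul hτ0.le, ← hσ, Real.sqrt_sq hσ0.le, add_comm]
  simp only [e1, e2]
  congr 1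
  refine integral_congr_ae (Eventually.of_forall fun η => ?_)
  simp only
  congr 2
  refine Prod.ext ?_ ?_
  · simp only; module
  · simp only; module

lemma M_nonneg {f : E d × E d → ℝ} {M : ℝ} (hM : ∀ η, |f η| ≤ M * JJ η.1 η.2 ^ 2) : 0 ≤ M := by
  have h1 := one_le_JJ (0 : E d) 0
  by_contra h
  push Not at h
  have : M * JJ (0 : E d) 0 ^ 2 < 0 := mul_neg_of_neg_of_pos h (by positivity)
  exact absurd ((abs_nonneg _).trans (hM 0)) (not_le.2 this)

lemma bd_affine {f : E d × E d → ℝ} {M : ℝ} (hM : ∀ η, |f η| ≤ M * JJ η.1 η.2 ^ 2) (x0 v0 : E d) (a b : ℝ)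
    (η : E d × E d) : |f (x0 + a • η.1, v0 + b • η.2)| ≤
      (M * (2 * (JJ x0 v0 + a ^ 2 + b ^ 2)) ^ 2) * JJ η.1 η.2 ^ 2 := by
  have hM0 := M_nonneg hM
  refine (hM _).trans ?_
  have h1 := one_le_JJ (x0 + a • η.1) (v0 + b • η.2)
  have h2 := JJ_affine x0 v0 η.1 η.2 a b
  calc M * JJ (x0 + a • η.1) (v0 + b • η.2) ^ 2
      ≤ M * (2 * (JJ x0 v0 + a ^ 2 + b ^ 2) * JJ η.1 η.2) ^ 2 := by gcongr
    _ = _ := by ring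

lemma FF_hasL (f : E d × E d → ℝ) (hf : Continuous f) (M : ℝ)
    (hM : ∀ η, |f η| ≤ M * JJ η.1 η.2 ^ 2) (z : Z d) (hz : -1 < z.1) : HasL (FF f) z 0 := by
  have hτ0 : 0 < z.1 + 1 := by linarith
  set τ := z.1 + 1 with hτ
  set σ := √τ with hσ
  have hσ0 : 0 < σ := Real.sqrt_pos.2 hτ0
  have hσ2 : σ ^ 2 = τ := Real.sq_sqrt hτ0.le
  obtain ⟨a, q, Mx, hex⟩ := FF_expand (fun η => f (z.2.1 - τ • z.2.2 + (τ * σ) • η.1, z.2.2 + σ • η.2))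
    (by fun_prop) _ (bd_affine hM (z.2.1 - τ • z.2.2) z.2.2 (τ * σ) σ)
  have hD : 0 < Dd d := by unfold Dd; positivity
  have := hasL_of_expand _ _ (1 / (48 * Dd d)) (by positivity) a (∑ i, Mx i i) q Mx hex
  rw [sub_self] at this
  have := hasL_unscale (FF f) _ z σ 0 hσ0 ?_ ?_ this
  · simpa using this
  · intro s hs hs'
    have := FF_scale f z τ σ rfl hσ0 hσ2 (-s) 0 0 (by linarith)
    rw [← this, hσ2]
    congr 1
    refine Prod.ext ?_ (Prod.ext ?_ ?_)
    · simp only; ring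
    · simp only; module
    · simp only; module
  · intro u
    have := FF_scale f z τ σ rfl hσ0 hσ2 0 0 u (by linarith)
    rw [← this]
    congr 1
    refine Prod.ext ?_ (Prod.ext ?_ ?_)
    · simp only; ring
    · simp only; module
    · simp only

lemma FF_init (f : E d × E d → ℝ) (x v : E d) : FF f (-1, x, v) = f (x, v) := by
  unfold FF
  simp only [neg_add_cancel, Real.sqrt_zero, zero_smul, mul_zero, sub_zero, add_zero]
  rw [integral_const_mul]
  have := c0_pos (d := d)
  change (c0 d)⁻¹ * (f (x, v) * c0 d) = _
  field_simp

/-- growth constant -/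
def CG (d : ℕ) : ℝ := (c0 d)⁻¹ * (∫ η : E d × E d, JJ η.1 η.2 ^ 2 * rho η) * 100

lemma CG_nonneg : 0 ≤ CG d := by
  unfold CG
  have := c0_pos (d := d)
  have h3 : 0 ≤ ∫ η : E d × E d, JJ η.1 η.2 ^ 2 * rho η :=
    integral_nonneg fun η => by have := rho_pos η; positivity
  positivity

lemma FF_growth (f : E d × E d → ℝ) (hf : Continuous f) (M : ℝ)
    (hM : ∀ η, |f η| ≤ M * JJ η.1 η.2 ^ 2) (z : Z d) (hz : -1 ≤ z.1) (hz' : z.1 ≤ 0) :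
    |FF f z| ≤ CG d * M * JJ z.2.1 z.2.2 ^ 2 := by
  have hM0 := M_nonneg hM
  have hτ0 : 0 ≤ z.1 + 1 := by linarith
  have hτ1 : z.1 + 1 ≤ 1 := by linarith
  obtain ⟨t, x, v⟩ := z
  simp only at *
  unfold FF
  simp only
  set τ := t + 1 with hτ
  have hs0 : 0 ≤ √τ := Real.sqrt_nonneg _
  have hs1 : √τ ≤ 1 := Real.sqrt_le_one.2 hτ1
  have hb := bd_affine hM (x - τ • v) v (τ * √τ) (√τ)
  have hfac : 2 * (JJ (x - τ • v) v + (τ * √τ) ^ 2 + √τ ^ 2) ≤ 10 * JJ x v := by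
    have h1 : ‖x - τ • v‖ ≤ ‖x‖ + ‖v‖ := by
      refine (norm_sub_le _ _).trans ?_
      rw [norm_smul, Real.norm_of_nonneg hτ0]
      have := norm_nonneg v
      nlinarith
    have h2 : ‖x - τ • v‖ ^ 2 ≤ 2 * ‖x‖ ^ 2 + 2 * ‖v‖ ^ 2 := by
      calc _ ≤ (‖x‖ + ‖v‖) ^ 2 := by gcongr
        _ ≤ _ := by nlinarith [sq_nonneg (‖x‖ - ‖v‖)]
    have h3 : (τ * √τ) ^ 2 ≤ 1 := pow_le_one₀ (by positivity) (mul_le_one₀ hτ1 hs0 hs1)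
    have h4 : √τ ^ 2 ≤ 1 := pow_le_one₀ hs0 hs1
    unfold JJ
    nlinarith [sq_nonneg ‖x‖, sq_nonneg ‖v‖]
  have hint : Integrable (fun η : E d × E d => (M * (10 * JJ x v) ^ 2) * (JJ η.1 η.2 ^ 2 * rho η)) := by
    refine Integrable.const_mul ?_ _
    refine integrable_of_bd (h := fun η => JJ η.1 η.2 ^ 2) (continuous_JJ2.pow 2) 1 2 fun η => ?_
    rw [abs_of_nonneg (by positivity), one_mul]
  have hle := norm_integral_le_of_norm_le (f := fun η : E d × E d =>
    f (x - τ • v + (τ * √τ) • η.1, v + √τ • η.2) * rho η) hint (Eventually.of_forall fun η => by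
      rw [norm_mul, Real.norm_of_nonneg (rho_pos η).le, Real.norm_eq_abs]
      have h1 := one_le_JJ (x - τ • v) v
      calc _ ≤ ((M * (2 * (JJ (x - τ • v) v + (τ * √τ) ^ 2 + √τ ^ 2)) ^ 2) * JJ η.1 η.2 ^ 2) * rho η :=
            mul_le_mul_of_nonneg_right (hb η) (rho_pos η).le
        _ ≤ ((M * (10 * JJ x v) ^ 2) * JJ η.1 η.2 ^ 2) * rho η := by
            have := rho_pos η
            gcongr
        _ = _ := by ring)
  rw [integral_const_mul, Real.norm_eq_abs] at hle
  rw [abs_mul, abs_of_pos (inv_pos.2 c0_pos)]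
  calc _ ≤ (c0 d)⁻¹ * _ := mul_le_mul_of_nonneg_left hle (inv_pos.2 c0_pos).le
    _ = _ := by unfold CG; ring

lemma FF_continuous (f : E d × E d → ℝ) (hf : Continuous f) (M : ℝ)
    (hM : ∀ η, |f η| ≤ M * JJ η.1 η.2 ^ 2) : Continuous (FF f) := by
  have hM0 := M_nonneg hM
  rw [continuous_iff_continuousAt]
  intro z0
  unfold FF
  refine ContinuousAt.mul continuousAt_const ?_
  set G : Z d → ℝ := fun z => 2 * (JJ (z.2.1 - (z.1 + 1) • z.2.2) z.2.2 + ((z.1 + 1) * √(z.1 + 1)) ^ 2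
    + √(z.1 + 1) ^ 2) with hG
  have hGc : Continuous G := by rw [hG]; unfold JJ; fun_prop
  have hG0 : ∀ z, 0 ≤ G z := fun z => by
    have := one_le_JJ (z.2.1 - (z.1 + 1) • z.2.2) z.2.2
    rw [hG]; positivity
  have hloc : ∀ᶠ z in 𝓝 z0, G z < G z0 + 1 := hGc.continuousAt.eventually_lt continuousAt_const (by linarith)
  refine continuousAt_of_dominated (bound := fun η => (M * (G z0 + 1) ^ 2) * (JJ η.1 η.2 ^ 2 * rho η)) ?_ ?_ ?_ ?_
  · refine Eventually.of_forall fun z => ?_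
    have := continuous_rho (d := d)
    exact Continuous.aestronglyMeasurable (by fun_prop)
  · filter_upwards [hloc] with z hz
    refine Eventually.of_forall fun η => ?_
    rw [norm_mul, Real.norm_of_nonneg (rho_pos η).le, Real.norm_eq_abs]
    have hb := bd_affine hM (z.2.1 - (z.1 + 1) • z.2.2) z.2.2 ((z.1 + 1) * √(z.1 + 1)) (√(z.1 + 1)) η
    have h0 := hG0 z
    calc _ ≤ ((M * (G z) ^ 2) * JJ η.1 η.2 ^ 2) * rho η := mul_le_mul_of_nonneg_right hb (rho_pos η).le
      _ ≤ ((M * (G z0 + 1) ^ 2) * JJ η.1 η.2 ^ 2) * rho η := by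
            have := rho_pos η
            gcongr
      _ = _ := by ring
  · refine Integrable.const_mul ?_ _
    refine integrable_of_bd (h := fun η => JJ η.1 η.2 ^ 2) (continuous_JJ2.pow 2) 1 2 fun η => ?_
    rw [abs_of_nonneg (by positivity), one_mul]
  · refine Eventually.of_forall fun η => ?_
    have : Continuous (fun z : Z d => f (z.2.1 - (z.1 + 1) • z.2.2 + ((z.1 + 1) * √(z.1 + 1)) • η.1,
      z.2.2 + √(z.1 + 1) • η.2) * rho η) := by fun_prop
    exact this.continuousAt


lemma hasL_time (z : Z d) : HasL (fun z : Z d => z.1 + 1) z 1 := by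
  refine ⟨1, fun _ => 0, ?_, ?_, by simp⟩
  · refine tendsto_const_nhds.congr' ?_
    filter_upwards [self_mem_nhdsWithin] with s hs
    have hs' : (0:ℝ) < s := hs
    field_simp
    ring
  · intro i
    refine tendsto_const_nhds.congr ?_
    intro s
    simp only
    ring

lemma core_half (g S : Z d → ℝ) (hg : Continuous g) (hL : ∀ z, HasL g z (S z)) (N K : ℝ) (hK0 : 0 ≤ K)
    (hN : ∀ z : Z d, -1 ≤ z.1 → z.1 ≤ 0 → |g z| ≤ N * JJ z.2.1 z.2.2 ^ 2)
    (hK : ∀ z : Z d, -1 ≤ z.1 → z.1 ≤ 0 → |S z - S 0| ≤ K * JJ z.2.1 z.2.2) (z : Z d) (hz : -1 ≤ z.1)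
    (hz' : z.1 ≤ 0) :
    |g z - FF (fun η => g (-1, η.1, η.2)) z - S 0 * (z.1 + 1)| ≤ K * (Real.exp (lamd d) * JJ z.2.1 z.2.2) := by
  set f : E d × E d → ℝ := fun η => g (-1, η.1, η.2) with hf
  have hfc : Continuous f := by rw [hf]; fun_prop
  have hM : ∀ η, |f η| ≤ N * JJ η.1 η.2 ^ 2 := fun η => hN (-1, η.1, η.2) (le_refl _) (by norm_num)
  have hN0 := M_nonneg hM
  have hFc := FF_continuous f hfc N hM
  have hL1 : ∀ z : Z d, -1 < z.1 → z.1 ≤ 0 → HasL (fun z => g z - FF f z - S 0 * (z.1 + 1)) z (S z - S 0) := by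
    intro z h1 h2
    have := ((hL z).sub (FF_hasL f hfc N hM z h1)).sub ((hasL_time z).const_mul (S 0))
    simpa using this
  have hcG := CG_nonneg (d := d)
  have hgr : ∀ z : Z d, -1 ≤ z.1 → z.1 ≤ 0 → |g z - FF f z - S 0 * (z.1 + 1)| ≤
      (N + CG d * N + |S 0|) * JJ z.2.1 z.2.2 ^ 2 := by
    intro z h1 h2
    have a1 := hN z h1 h2
    have a2 := FF_growth f hfc N hM z h1 h2
    have a3 : |S 0 * (z.1 + 1)| ≤ |S 0| * JJ z.2.1 z.2.2 ^ 2 := by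
      have := one_le_JJ z.2.1 z.2.2
      rw [abs_mul]
      refine mul_le_mul_of_nonneg_left ?_ (abs_nonneg _)
      rw [abs_of_nonneg (by linarith)]
      nlinarith
    have := abs_sub (g z - FF f z) (S 0 * (z.1 + 1))
    have := abs_sub (g z) (FF f z)
    linarith
  have hC0 : 0 ≤ N + CG d * N + |S 0| := by positivity
  have hinit : ∀ x v : E d, g (-1, x, v) - FF f (-1, x, v) - S 0 * ((-1:ℝ) + 1) = 0 := by
    intro x v
    rw [FF_init, hf]; ring
  rw [abs_le']
  constructor
  · exact maxp (fun z => g z - FF f z - S 0 * (z.1 + 1)) (fun z => S z - S 0) K _ hK0 hC0 (by fun_prop) hL1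
      (fun z h1 h2 => (le_abs_self _).trans (hK z h1.le h2)) (fun x v => (hinit x v).le)
      (fun z h1 h2 => (le_abs_self _).trans (hgr z h1 h2)) z hz hz'
  · exact maxp (fun z => -(g z - FF f z - S 0 * (z.1 + 1))) (fun z => -(S z - S 0)) K _ hK0 hC0 (by fun_prop)
      (fun z h1 h2 => (hL1 z h1 h2).neg)
      (fun z h1 h2 => (neg_le_abs _).trans (hK z h1.le h2)) (fun x v => by
        have := hinit x v
        simp only [this, neg_zero, le_refl])
      (fun z h1 h2 => (neg_le_abs _).trans (hgr z h1 h2)) z hz hz'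

lemma kpoly_add (a b a' b' : ℝ) (q q' : Fin d → ℝ) (M M' : Matrix (Fin d) (Fin d) ℝ) (ζ : Z d) :
    kpoly a b q M ζ + kpoly a' b' q' M' ζ = kpoly (a + a') (b + b') (q + q') (M + M') ζ := by
  unfold kpoly
  simp only [Pi.add_apply, Matrix.add_apply, add_mul, Finset.sum_add_distrib]
  ring

lemma core (g S : Z d → ℝ) (hg : Continuous g) (hL : ∀ z, HasL g z (S z)) (N K : ℝ) (hK0 : 0 ≤ K)
    (hN : ∀ z : Z d, -1 ≤ z.1 → z.1 ≤ 0 → |g z| ≤ N * JJ z.2.1 z.2.2 ^ 2)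
    (hK : ∀ z : Z d, -1 ≤ z.1 → z.1 ≤ 0 → |S z - S 0| ≤ K * JJ z.2.1 z.2.2) :
    ∃ (a b : ℝ) (q : Fin d → ℝ) (Mx : Matrix (Fin d) (Fin d) ℝ), ∀ l, 0 < l → l ≤ 1 / (48 * Dd d) →
      ∀ ζ ∈ kCyl l (0 : Z d), |g ζ - kpoly a b q Mx ζ| ≤ CE d * N * l ^ 3 + K * (Real.exp (lamd d) * 3) := by
  obtain ⟨a, q, Mx, h⟩ := FF_expand (fun η => g (-1, η.1, η.2)) (by fun_prop) N
    (fun η => hN (-1, η.1, η.2) (le_refl _) (by norm_num))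
  refine ⟨a + S 0, ∑ i, Mx i i + S 0, q, Mx, ?_⟩
  intro l hl0 hl ζ hζ
  have h1 := h l hl0 hl ζ hζ
  obtain ⟨s, y, u⟩ := ζ
  simp only [kCyl, Set.mem_ofPred_eq, Prod.fst_zero, Prod.snd_zero, sub_zero, smul_zero, zero_sub] at hζ
  obtain ⟨hs, hs', hy, hu⟩ := hζ
  have hD : 100 ≤ Dd d := by unfold Dd; have : (0:ℝ) ≤ d := by positivity
                             linarith
  have hlD : l * (48 * Dd d) ≤ 1 := by rwa [le_div_iff₀ (by positivity)] at hl
  have hl1 : l ≤ 1 / 2 := by nlinarith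
  have hs1 : -1 ≤ s := by nlinarith
  have h2 := core_half g S hg hL N K hK0 hN hK (s, y, u) hs1 hs'
  have hJ : JJ y u ≤ 3 := by
    have : l ^ 3 ≤ 1 := pow_le_one₀ hl0.le (by linarith)
    have b1 : ‖y‖ ^ 2 ≤ 1 := pow_le_one₀ (norm_nonneg _) (by linarith)
    have b2 : ‖u‖ ^ 2 ≤ 1 := pow_le_one₀ (norm_nonneg _) (by linarith)
    unfold JJ; linarith
  have h3 : K * (Real.exp (lamd d) * JJ y u) ≤ K * (Real.exp (lamd d) * 3) := by gcongr
  have e : kpoly (a + S 0) (∑ i, Mx i i + S 0) q Mx (s, y, u) = kpoly a (∑ i, Mx i i) q Mx (s, y, u) + S 0 * (s + 1) := by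
    unfold kpoly; simp only; ring
  rw [e]
  simp only at h2
  rw [abs_le] at *
  constructor <;> linarith


lemma kpoly_par (a b : ℝ) (q : Fin d → ℝ) (M : Matrix (Fin d) (Fin d) ℝ) (t : ℝ) (x v w : E d) :
    kpoly a b q M (t, x, v + w) + kpoly a b q M (t, x, v - w) - 2 * kpoly a b q M (t, x, v) =
      ∑ i, ∑ j, M i j * w i * w j := by
  have e1 : ∑ i, q i * (v i + w i) + ∑ i, q i * (v i - w i) = 2 * ∑ i, q i * v i := by
    rw [← Finset.sum_add_distrib, Finset.mul_sum]
    exact Finset.sum_congr rfl fun i _ => by ring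
  have e2 : ∑ i, ∑ j, M i j * (v i + w i) * (v j + w j) + ∑ i, ∑ j, M i j * (v i - w i) * (v j - w j)
      = 2 * ∑ i, ∑ j, M i j * v i * v j + 2 * ∑ i, ∑ j, M i j * w i * w j := by
    simp only [Finset.mul_sum, ← Finset.sum_add_distrib]
    exact Finset.sum_congr rfl fun i _ => Finset.sum_congr rfl fun j _ => by ring
  unfold kpoly
  simp only [PiLp.add_apply, PiLp.sub_apply]
  linear_combination e1 + (1/2) * e2

lemma kpoly_hasL (a b : ℝ) (q : Fin d → ℝ) (M : Matrix (Fin d) (Fin d) ℝ) (z : Z d) :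
    HasL (kpoly a b q M) z (b - ∑ i, M i i) := by
  refine ⟨b, fun i => M i i, ?_, ?_, rfl⟩
  · refine tendsto_const_nhds.congr' ?_
    filter_upwards [self_mem_nhdsWithin] with s hs
    have hs' : (0:ℝ) < s := hs
    unfold kpoly
    simp only
    field_simp
    ring
  · intro i
    refine tendsto_const_nhds.congr' ?_
    filter_upwards [self_mem_nhdsWithin] with s hs
    have hs' : (0:ℝ) < s := hs
    have h1 := kpoly_par a b q M z.1 z.2.1 z.2.2 (s • EuclideanSpace.single i (1:ℝ))
    have h2 : ∑ k, ∑ j, M k j * (s • EuclideanSpace.single i (1:ℝ) : E d) k * (s • EuclideanSpace.single i (1:ℝ) : E d) j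
        = M i i * s ^ 2 := by
      simp [PiLp.single_apply]
      ring
    rw [h2] at h1
    change _ = (_ - 2 * kpoly a b q M (z.1, z.2.1, z.2.2)) / _
    rw [h1]
    field_simp

lemma kpoly_continuous (a b : ℝ) (q : Fin d → ℝ) (M : Matrix (Fin d) (Fin d) ℝ) :
    Continuous (kpoly a b q M) := by
  unfold kpoly
  fun_prop

lemma kpoly_double (a b : ℝ) (q : Fin d → ℝ) (M : Matrix (Fin d) (Fin d) ℝ) (t : ℝ) (x v : E d) :
    kpoly a b q M (t, x, v) = 3 * kpoly a b q M (t / 4, 0, (1/2 : ℝ) • v) - 3 * kpoly a b q M 0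
      + kpoly a b q M (t / 4, 0, -((1/2 : ℝ) • v)) := by
  have e1 : ∑ i, q i * (1/2 * v i) = 1/2 * ∑ i, q i * v i := by
    rw [Finset.mul_sum]; exact Finset.sum_congr rfl fun i _ => by ring
  have e2 : ∑ i, q i * -(1/2 * v i) = -(1/2) * ∑ i, q i * v i := by
    rw [Finset.mul_sum]; exact Finset.sum_congr rfl fun i _ => by ring
  have e3 : ∑ i, ∑ j, M i j * (1/2 * v i) * (1/2 * v j) = 1/4 * ∑ i, ∑ j, M i j * v i * v j := by
    simp only [Finset.mul_sum]
    exact Finset.sum_congr rfl fun i _ => Finset.sum_congr rfl fun j _ => by ring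
  have e4 : ∑ i, ∑ j, M i j * -(1/2 * v i) * -(1/2 * v j) = 1/4 * ∑ i, ∑ j, M i j * v i * v j := by
    simp only [Finset.mul_sum]
    exact Finset.sum_congr rfl fun i _ => Finset.sum_congr rfl fun j _ => by ring
  have e0 : kpoly a b q M 0 = a := by
    have := kpoly_time a b q M 0
    rw [mul_zero, add_zero] at this
    exact this
  rw [e0]
  unfold kpoly
  simp only [PiLp.smul_apply, PiLp.neg_apply, smul_eq_mul, e1, e2, e3, e4]
  ring

lemma mem_kCyl0 (r : ℝ) (t : ℝ) (x v : E d) :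
    ((t, x, v) : Z d) ∈ kCyl r (0 : Z d) ↔ -r ^ 2 < t ∧ t ≤ 0 ∧ ‖x‖ < r ^ 3 ∧ ‖v‖ < r := by
  simp only [kCyl, Set.mem_ofPred_eq, Prod.fst_zero, Prod.snd_zero, sub_zero, smul_zero, zero_sub]

lemma kpoly_double_bd (a b : ℝ) (q : Fin d → ℝ) (M : Matrix (Fin d) (Fin d) ℝ) (r A : ℝ) (hr : 0 < r)
    (h : ∀ z ∈ kCyl r (0 : Z d), |kpoly a b q M z| ≤ A) :
    ∀ z ∈ kCyl (2 * r) (0 : Z d), |kpoly a b q M z| ≤ 7 * A := by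
  rintro ⟨t, x, v⟩ hz
  rw [mem_kCyl0] at hz
  obtain ⟨h1, h2, h3, h4⟩ := hz
  rw [kpoly_double]
  have hv : ‖(1/2 : ℝ) • v‖ < r := by
    rw [norm_smul]; norm_num; linarith
  have hr3 : 0 < r ^ 3 := by positivity
  have hr2 : 0 < r ^ 2 := by positivity
  have m1 := h (t / 4, 0, (1/2 : ℝ) • v) ((mem_kCyl0 _ _ _ _).2 ⟨by linarith [show (2 * r) ^ 2 = 4 * r ^ 2 by ring], by linarith, by simpa using hr3, hv⟩)
  have m2 := h (t / 4, 0, -((1/2 : ℝ) • v)) ((mem_kCyl0 _ _ _ _).2 ⟨by linarith [show (2 * r) ^ 2 = 4 * r ^ 2 by ring], by linarith, by simpa using hr3, by rwa [norm_neg]⟩)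
  have m3 := h (0, 0, 0) ((mem_kCyl0 _ _ _ _).2 ⟨by linarith, le_refl _, by simpa using hr3, by simpa using hr⟩)
  change |3 * _ - 3 * kpoly a b q M (0, 0, 0) + _| ≤ _
  rw [abs_le] at *
  constructor <;> linarith

lemma kpoly_sub (a b a' b' : ℝ) (q q' : Fin d → ℝ) (M M' : Matrix (Fin d) (Fin d) ℝ) (ζ : Z d) :
    kpoly a b q M ζ - kpoly a' b' q' M' ζ = kpoly (a - a') (b - b') (q - q') (M - M') ζ := by
  unfold kpoly
  simp only [Pi.sub_apply, Matrix.sub_apply, sub_mul, Finset.sum_sub_distrib]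
  ring

lemma kCyl_mono {r r' : ℝ} (hr : 0 ≤ r) (h : r ≤ r') : kCyl r (0 : Z d) ⊆ kCyl r' 0 := by
  rintro ⟨t, x, v⟩ hz
  rw [mem_kCyl0] at *
  have h2 : r ^ 2 ≤ r' ^ 2 := by gcongr
  have h3 : r ^ 3 ≤ r' ^ 3 := by gcongr
  exact ⟨by linarith [hz.1], hz.2.1, by linarith [hz.2.2.1], by linarith [hz.2.2.2]⟩

lemma growth (g : Z d → ℝ) (N : ℝ) (hN0 : 0 ≤ N)
    (h : ∀ r : ℝ, 1 ≤ r → ∃ (a b : ℝ) (q : Fin d → ℝ) (M : Matrix (Fin d) (Fin d) ℝ),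
      ∀ z ∈ kCyl r (0 : Z d), |g z - kpoly a b q M z| ≤ N * r ^ 3) :
    ∃ (a b : ℝ) (q : Fin d → ℝ) (M : Matrix (Fin d) (Fin d) ℝ), ∀ z : Z d, -1 ≤ z.1 → z.1 ≤ 0 →
      |g z - kpoly a b q M z| ≤ (18432 * N) * JJ z.2.1 z.2.2 ^ 2 := by
  choose a b q M hp using fun k : ℕ => h (2 ^ k) (one_le_pow₀ (by norm_num))
  refine ⟨a 0, b 0, q 0, M 0, ?_⟩
  have key : ∀ k : ℕ, ∀ z ∈ kCyl (2 ^ k) (0 : Z d),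
      |kpoly (a k) (b k) (q k) (M k) z - kpoly (a 0) (b 0) (q 0) (M 0) z| ≤ 7 * N * 16 ^ k := by
    intro k
    induction k with
    | zero => intro z _; simp; positivity
    | succ k ih =>
      have h1 : ∀ z ∈ kCyl (2 ^ k) (0 : Z d), |kpoly (a (k+1)) (b (k+1)) (q (k+1)) (M (k+1)) z
          - kpoly (a 0) (b 0) (q 0) (M 0) z| ≤ 7 * N * 16 ^ k + 9 * N * 8 ^ k := by
        intro z hz
        have i1 := ih z hz
        have i2 := hp k z hz
        have i3 := hp (k+1) z (kCyl_mono (by positivity) (pow_le_pow_right₀ (by norm_num) (by omega)) hz)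
        have e1 : ((2:ℝ) ^ k) ^ 3 = 8 ^ k := by rw [← pow_mul, mul_comm, pow_mul]; norm_num
        have e2 : ((2:ℝ) ^ (k+1)) ^ 3 = 8 * 8 ^ k := by rw [← pow_mul, mul_comm, pow_mul]; norm_num; ring
        rw [e1] at i2
        rw [e2] at i3
        rw [abs_le] at *
        constructor <;> nlinarith
      simp only [kpoly_sub] at h1 ⊢
      have h2 := kpoly_double_bd _ _ _ _ _ _ (by positivity) h1
      intro z hz
      rw [pow_succ, mul_comm] at hz
      refine (h2 z hz).trans ?_
      have h8 : (8:ℝ) ^ k ≤ 16 ^ k := pow_le_pow_left₀ (by norm_num) (by norm_num) k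
      rw [pow_succ]
      nlinarith [mul_le_mul_of_nonneg_left h8 hN0]
  rintro ⟨t, x, v⟩ ht ht'
  simp only at *
  have hx := norm_nonneg x
  have hv := norm_nonneg v
  obtain ⟨n, hn1, hn2⟩ := exists_nat_pow_near (show (1:ℝ) ≤ 2 + ‖x‖ + ‖v‖ by linarith) (show (1:ℝ) < 2 by norm_num)
  set R := 2 + ‖x‖ + ‖v‖ with hR
  have hm : ((t, x, v) : Z d) ∈ kCyl (2 ^ (n+1)) (0 : Z d) := by
    rw [mem_kCyl0]
    set p := (2:ℝ) ^ (n+1)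
    have hp2 : 2 ≤ p := by linarith
    refine ⟨by nlinarith, ht', ?_, by linarith⟩
    have : p ≤ p ^ 3 := le_self_pow₀ (by linarith) (by norm_num)
    linarith
  have h1 := key _ _ hm
  have h2 := hp _ _ hm
  have e1 : ((2:ℝ) ^ (n+1)) ^ 3 = 8 ^ (n+1) := by rw [← pow_mul, mul_comm, pow_mul]; norm_num
  rw [e1] at h2
  have h8 : (8:ℝ) ^ (n+1) ≤ 16 ^ (n+1) := pow_le_pow_left₀ (by norm_num) (by norm_num) _
  have h8' := mul_le_mul_of_nonneg_left h8 hN0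
  have e3 : (16:ℝ) ^ (n+1) = 16 * ((2 ^ n) ^ 2) ^ 2 := by
    rw [← pow_mul, ← pow_mul, pow_succ, show (16:ℝ) = 2 ^ 4 by norm_num, ← pow_mul]; ring
  have hJ : R ^ 2 ≤ 12 * JJ x v := by
    unfold JJ
    nlinarith [sq_nonneg (‖x‖ - ‖v‖), sq_nonneg (‖x‖ - 2), sq_nonneg (‖v‖ - 2)]
  have h16 : (16:ℝ) ^ (n+1) ≤ 16 * (12 * JJ x v) ^ 2 := by
    rw [e3]
    have : ((2:ℝ) ^ n) ^ 2 ≤ 12 * JJ x v := le_trans (by gcongr) hJ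
    gcongr
  have h16' := mul_le_mul_of_nonneg_left h16 hN0
  rw [abs_le] at *
  constructor <;> nlinarith

/-- final constants at unit scale -/
def K1 (d : ℕ) : ℝ := CE d * 18432
/-- final constants at unit scale -/
def K2 (d : ℕ) : ℝ := 9 * Real.exp (lamd d)

lemma unit_scale (g S : Z d → ℝ) (hg : Continuous g) (hL : ∀ z, HasL g z (S z)) (N K : ℝ)
    (hN0 : 0 ≤ N) (hK0 : 0 ≤ K)
    (h : ∀ r : ℝ, 1 ≤ r → ∃ (a b : ℝ) (q : Fin d → ℝ) (M : Matrix (Fin d) (Fin d) ℝ),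
      ∀ z ∈ kCyl r (0 : Z d), |g z - kpoly a b q M z| ≤ N * r ^ 3)
    (hS : ∀ r : ℝ, 1 ≤ r → ∀ z ∈ kCyl r (0 : Z d), |S z - S 0| ≤ K * r) (l : ℝ) (hl0 : 0 < l)
    (hl : l ≤ 1 / (48 * Dd d)) :
    ∃ (a b : ℝ) (q : Fin d → ℝ) (M : Matrix (Fin d) (Fin d) ℝ),
      ∀ z ∈ kCyl l (0 : Z d), |g z - kpoly a b q M z| ≤ K1 d * N * l ^ 3 + K2 d * K := by
  obtain ⟨a, b, q, M, hp⟩ := growth g N hN0 h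
  obtain ⟨a', b', q', M', hq⟩ := core (fun z => g z - kpoly a b q M z) (fun z => S z - (b - ∑ i, M i i))
    (hg.sub (kpoly_continuous a b q M)) (fun z => (hL z).sub (kpoly_hasL a b q M z)) (18432 * N) (3 * K)
    (by positivity) hp (by
      rintro ⟨t, x, v⟩ ht ht'
      simp only at *
      have hx := norm_nonneg x
      have hv := norm_nonneg v
      have := hS (2 + ‖x‖ + ‖v‖) (by linarith) (t, x, v) (by
        rw [mem_kCyl0]
        set R := 2 + ‖x‖ + ‖v‖
        have hR : 2 ≤ R := by simp only [R]; linarith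
        refine ⟨by nlinarith, ht', ?_, by simp only [R]; linarith⟩
        have : R ≤ R ^ 3 := le_self_pow₀ (by linarith) (by norm_num)
        have : ‖x‖ < R := by simp only [R]; linarith
        linarith)
      have hJ : 2 + ‖x‖ + ‖v‖ ≤ 3 * JJ x v := by
        unfold JJ; nlinarith [sq_nonneg (‖x‖ - 1), sq_nonneg (‖v‖ - 1), sq_nonneg ‖x‖, sq_nonneg ‖v‖]
      have h2 := mul_le_mul_of_nonneg_left hJ hK0
      rw [sub_sub_sub_cancel_right]
      linarith)
  refine ⟨a + a', b + b', q + q', M + M', fun z hz => ?_⟩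
  have := hq l hl0 hl z hz
  rw [← kpoly_add, ← sub_sub]
  refine this.trans (le_of_eq ?_)
  unfold K1 K2; ring


/-- kinetic translation and dilation -/
def op (z0 : Z d) (ρ : ℝ) (ζ : Z d) : Z d :=
  (z0.1 + ρ ^ 2 * ζ.1, z0.2.1 + ρ ^ 3 • ζ.2.1 + (ρ ^ 2 * ζ.1) • z0.2.2, z0.2.2 + ρ • ζ.2.2)

lemma op_continuous (z0 : Z d) (ρ : ℝ) : Continuous (op z0 ρ) := by
  unfold op; fun_prop

lemma op_zero (z0 : Z d) (ρ : ℝ) : op z0 ρ 0 = z0 := by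
  unfold op; simp

lemma op_mem (z0 : Z d) (ρ r : ℝ) (hρ : 0 < ρ) (ζ : Z d) : op z0 ρ ζ ∈ kCyl (ρ * r) z0 ↔ ζ ∈ kCyl r (0 : Z d) := by
  obtain ⟨s, y, u⟩ := ζ
  rw [mem_kCyl0]
  simp only [kCyl, op, Set.mem_ofPred_eq, add_sub_cancel_left]
  have e1 : z0.2.1 + ρ ^ 3 • y + (ρ ^ 2 * s) • z0.2.2 - z0.2.1 - (ρ ^ 2 * s) • z0.2.2 = ρ ^ 3 • y := by module
  rw [e1, norm_smul, norm_smul, Real.norm_of_nonneg hρ.le, Real.norm_of_nonneg (by positivity : 0 ≤ ρ ^ 3),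
    mul_pow, mul_pow, mul_lt_mul_iff_right₀ hρ, mul_lt_mul_iff_right₀ (by positivity : 0 < ρ ^ 3)]
  have h2 : 0 < ρ ^ 2 := by positivity
  refine and_congr ?_ (and_congr ?_ Iff.rfl)
  · constructor
    · intro h; nlinarith
    · intro h; nlinarith
  · constructor
    · intro h; nlinarith
    · intro h; nlinarith

lemma op_surj (z0 : Z d) (ρ : ℝ) (hρ : 0 < ρ) (z : Z d) : ∃ ζ, op z0 ρ ζ = z := by
  refine ⟨((z.1 - z0.1) / ρ ^ 2, (ρ ^ 3)⁻¹ • (z.2.1 - z0.2.1 - (z.1 - z0.1) • z0.2.2), ρ⁻¹ • (z.2.2 - z0.2.2)), ?_⟩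
  unfold op
  have e : ρ ^ 2 * ((z.1 - z0.1) / ρ ^ 2) = z.1 - z0.1 := by field_simp
  simp only [e, smul_inv_smul₀ hρ.ne', smul_inv_smul₀ (pow_pos hρ 3).ne']
  refine Prod.ext ?_ (Prod.ext ?_ ?_)
  · simp only; ring
  · simp only; module
  · simp only; module

lemma kpoly_affine (a b : ℝ) (q : Fin d → ℝ) (M : Matrix (Fin d) (Fin d) ℝ) (c k ρ : ℝ) (w : E d) :
    ∃ (a' b' : ℝ) (q' : Fin d → ℝ) (M' : Matrix (Fin d) (Fin d) ℝ), ∀ (s : ℝ) (y y' u : E d),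
      kpoly a b q M (c + k * s, y, w + ρ • u) = kpoly a' b' q' M' (s, y', u) := by
  refine ⟨kpoly a b q M (c, 0, w), b * k, fun i => ρ * (q i + (1/2) * ∑ j, (M i j + M j i) * w j),
    ρ ^ 2 • M, ?_⟩
  intro s y y' u
  have e0 : ∑ i, ∑ j, M j i * w j * u i = ∑ i, ∑ j, M i j * w i * u j := Finset.sum_comm
  have e1 : ∑ i, q i * (w i + ρ * u i) = ∑ i, q i * w i + ρ * ∑ i, q i * u i := by
    rw [Finset.mul_sum, ← Finset.sum_add_distrib]
    exact Finset.sum_congr rfl fun i _ => by ring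
  have e2 : ∑ i, ∑ j, M i j * (w i + ρ * u i) * (w j + ρ * u j) = ∑ i, ∑ j, M i j * w i * w j
      + ρ * ∑ i, ∑ j, M i j * w j * u i + ρ * ∑ i, ∑ j, M i j * w i * u j + ρ ^ 2 * ∑ i, ∑ j, M i j * u i * u j := by
    simp only [Finset.mul_sum, ← Finset.sum_add_distrib]
    exact Finset.sum_congr rfl fun i _ => Finset.sum_congr rfl fun j _ => by ring
  have e3 : ∑ i, ρ * (q i + (1/2) * ∑ j, (M i j + M j i) * w j) * u i =
      ρ * ∑ i, q i * u i + (1/2) * (ρ * ∑ i, ∑ j, M i j * w j * u i + ρ * ∑ i, ∑ j, M j i * w j * u i) := by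
    simp only [Finset.mul_sum, ← Finset.sum_add_distrib]
    refine Finset.sum_congr rfl fun i _ => ?_
    rw [mul_add, add_mul, Finset.mul_sum, Finset.sum_mul]
    congr 1
    · ring
    · exact Finset.sum_congr rfl fun j _ => by ring
  have e4 : ∑ i, ∑ j, ρ ^ 2 * M i j * u i * u j = ρ ^ 2 * ∑ i, ∑ j, M i j * u i * u j := by
    simp only [Finset.mul_sum]
    exact Finset.sum_congr rfl fun i _ => Finset.sum_congr rfl fun j _ => by ring
  rw [e0] at e3
  unfold kpoly
  simp only [PiLp.add_apply, PiLp.smul_apply, smul_eq_mul, Matrix.smul_apply, e1, e2, e3, e4]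
  ring

lemma hasL_op (g : Z d → ℝ) (z0 : Z d) (ρ : ℝ) (hρ : 0 < ρ) (ζ : Z d) (ℓ : ℝ) (h : HasL g (op z0 ρ ζ) ℓ) :
    HasL (fun ζ => g (op z0 ρ ζ)) ζ (ρ ^ 2 * ℓ) := by
  obtain ⟨b, m, a1, a2, a3⟩ := h
  have tt : ∀ c : ℝ, 0 < c → Tendsto (fun s : ℝ => c * s) (𝓝[>] 0) (𝓝[>] 0) := by
    intro c hc
    refine (tendsto_div_pos (inv_pos.2 hc)).congr fun s => ?_
    field_simp
  refine ⟨ρ ^ 2 * b, fun i => ρ ^ 2 * m i, ?_, ?_, ?_⟩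
  · have := (a1.comp (tt (ρ ^ 2) (by positivity))).const_mul (ρ ^ 2)
    rw [mul_neg] at this
    refine this.congr' ?_
    filter_upwards [self_mem_nhdsWithin] with s hs
    have hs' : (0:ℝ) < s := hs
    have e : op z0 ρ (ζ.1 - s, ζ.2.1 - s • ζ.2.2, ζ.2.2) =
      ((op z0 ρ ζ).1 - ρ ^ 2 * s, (op z0 ρ ζ).2.1 - (ρ ^ 2 * s) • (op z0 ρ ζ).2.2, (op z0 ρ ζ).2.2) := by
      unfold op
      refine Prod.ext ?_ (Prod.ext ?_ ?_)
      · simp only; ring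
      · simp only; module
      · simp only
    rw [e]
    simp only [Function.comp]
    field_simp
  · intro i
    have := ((a2 i).comp (tt ρ hρ)).const_mul (ρ ^ 2)
    refine this.congr' ?_
    filter_upwards [self_mem_nhdsWithin] with s hs
    have hs' : (0:ℝ) < s := hs
    have e1 : ∀ w : E d, op z0 ρ (ζ.1, ζ.2.1, ζ.2.2 + s • w) =
      ((op z0 ρ ζ).1, (op z0 ρ ζ).2.1, (op z0 ρ ζ).2.2 + (ρ * s) • w) := by
      intro w
      unfold op
      refine Prod.ext ?_ (Prod.ext ?_ ?_)
      · simp only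
      · simp only
      · simp only; module
    have e2 : ∀ w : E d, op z0 ρ (ζ.1, ζ.2.1, ζ.2.2 - s • w) =
      ((op z0 ρ ζ).1, (op z0 ρ ζ).2.1, (op z0 ρ ζ).2.2 - (ρ * s) • w) := by
      intro w
      unfold op
      refine Prod.ext ?_ (Prod.ext ?_ ?_)
      · simp only
      · simp only
      · simp only; module
    rw [e1, e2]
    simp only [Function.comp]
    field_simp
  · rw [a3, mul_sub, Finset.mul_sum]

lemma any_scale (α : ℝ) (hα0 : 0 < α) (hα1 : α < 1) (g S : Z d → ℝ) (hg : Continuous g)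
    (hL : ∀ z, HasL g z (S z)) (N K : ℝ) (hN0 : 0 ≤ N) (hK0 : 0 ≤ K)
    (h : ∀ (z0 : Z d) (r : ℝ), 0 < r → ∃ (a b : ℝ) (q : Fin d → ℝ) (M : Matrix (Fin d) (Fin d) ℝ),
      ∀ z ∈ kCyl r z0, |g z - kpoly a b q M z| ≤ N * r ^ (2 + α))
    (hS : ∀ (z0 : Z d) (r : ℝ), 0 < r → ∀ z ∈ kCyl r z0, |S z - S z0| ≤ K * r ^ α) (l : ℝ) (hl0 : 0 < l)
    (hl : l ≤ 1 / (48 * Dd d)) (z0 : Z d) (r : ℝ) (hr : 0 < r) :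
    ∃ (a b : ℝ) (q : Fin d → ℝ) (M : Matrix (Fin d) (Fin d) ℝ),
      ∀ z ∈ kCyl r z0, |g z - kpoly a b q M z| ≤ ((K1 d * N * l ^ 3 + K2 d * K) / l ^ (2 + α)) * r ^ (2 + α) := by
  set ρ := r / l with hρd
  have hρ : 0 < ρ := by positivity
  have hρl : ρ * l = r := by rw [hρd]; field_simp
  set P := ρ ^ (2 + α) with hP
  have hP0 : 0 < P := by positivity
  have hP2 : P = ρ ^ 2 * ρ ^ α := by
    rw [hP, Real.rpow_add hρ, Real.rpow_two]
  have hu := unit_scale (fun ζ => g (op z0 ρ ζ)) (fun ζ => ρ ^ 2 * S (op z0 ρ ζ))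
    (hg.comp (op_continuous z0 ρ)) (fun ζ => hasL_op g z0 ρ hρ ζ _ (hL _)) (N * P) (K * P) (by positivity)
    (by positivity) ?_ ?_ l hl0 hl
  · obtain ⟨a, b, q, M, hp⟩ := hu
    obtain ⟨a', b', q', M', hq⟩ := kpoly_affine a b q M (-z0.1 / ρ ^ 2) (1 / ρ ^ 2) ρ⁻¹ (-(ρ⁻¹ • z0.2.2))
    refine ⟨a', b', q', M', fun z hz => ?_⟩
    obtain ⟨ζ, rfl⟩ := op_surj z0 ρ hρ z
    rw [← hρl, op_mem z0 ρ l hρ] at hz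
    have h1 := hp ζ hz
    have h2 := hq (op z0 ρ ζ).1 ζ.2.1 (op z0 ρ ζ).2.1 (op z0 ρ ζ).2.2
    have e : ((-z0.1 / ρ ^ 2 + 1 / ρ ^ 2 * (op z0 ρ ζ).1, ζ.2.1, -(ρ⁻¹ • z0.2.2) + ρ⁻¹ • (op z0 ρ ζ).2.2) : Z d) = ζ := by
      unfold op
      refine Prod.ext ?_ (Prod.ext ?_ ?_)
      · simp only; field_simp; ring
      · simp only
      · simp only [smul_add, inv_smul_smul₀ hρ.ne']; module
    rw [e] at h2
    change kpoly a b q M ζ = kpoly a' b' q' M' (op z0 ρ ζ) at h2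
    rw [← h2]
    refine h1.trans (le_of_eq ?_)
    have e3 : r ^ (2 + α) = P * l ^ (2 + α) := by
      rw [hP, ← Real.mul_rpow hρ.le hl0.le, hρl]
    rw [e3]
    field_simp
  · intro R hR
    have hR0 : 0 < R := by linarith
    obtain ⟨a, b, q, M, hp⟩ := h z0 (ρ * R) (by positivity)
    obtain ⟨a', b', q', M', hq⟩ := kpoly_affine a b q M z0.1 (ρ ^ 2) ρ z0.2.2
    refine ⟨a', b', q', M', fun ζ hζ => ?_⟩
    have h1 := hp _ ((op_mem z0 ρ R hρ ζ).2 hζ)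
    have h2 := hq ζ.1 (z0.2.1 + ρ ^ 3 • ζ.2.1 + (ρ ^ 2 * ζ.1) • z0.2.2) ζ.2.1 ζ.2.2
    change kpoly a b q M (op z0 ρ ζ) = kpoly a' b' q' M' ζ at h2
    rw [← h2]
    refine h1.trans ?_
    rw [Real.mul_rpow hρ.le hR0.le, ← hP, mul_assoc]
    have : R ^ (2 + α) ≤ R ^ 3 := by
      rw [← Real.rpow_natCast]
      exact Real.rpow_le_rpow_of_exponent_le hR (by push_cast; linarith)
    gcongr
  · intro R hR ζ hζ
    have hR0 : 0 < R := by linarith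
    have h1 := hS z0 (ρ * R) (by positivity) _ ((op_mem z0 ρ R hρ ζ).2 hζ)
    rw [op_zero, ← mul_sub, abs_mul, abs_of_pos (by positivity : 0 < ρ ^ 2)]
    rw [Real.mul_rpow hρ.le hR0.le] at h1
    have : R ^ α ≤ R := by
      conv_rhs => rw [← Real.rpow_one R]
      exact Real.rpow_le_rpow_of_exponent_le hR hα1.le
    calc ρ ^ 2 * |S (op z0 ρ ζ) - S z0| ≤ ρ ^ 2 * (K * (ρ ^ α * R ^ α)) := by gcongr
      _ ≤ ρ ^ 2 * (K * (ρ ^ α * R)) := by gcongr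
      _ = _ := by rw [hP2]; ring

lemma kSemi2_extract (α : ℝ) (g : Z d → ℝ) (N : ℝ) (hN : kSemi2 α Set.univ g < ENNReal.ofReal N) (z0 : Z d) (r : ℝ)
    (hr : 0 < r) : ∃ (a b : ℝ) (q : Fin d → ℝ) (M : Matrix (Fin d) (Fin d) ℝ),
      ∀ z ∈ kCyl r z0, |g z - kpoly a b q M z| ≤ N * r ^ (2 + α) := by
  have hr' : 0 < r ^ (2 + α) := by positivity
  have hN0 : 0 < N := ENNReal.ofReal_pos.1 (lt_of_le_of_lt bot_le hN)
  have h1 : (⨅ (a : ℝ) (b : ℝ) (q : Fin d → ℝ) (M : Matrix (Fin d) (Fin d) ℝ),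
      ⨆ z ∈ kCyl r z0, ENNReal.ofReal |g z - kpoly a b q M z|)
      / ENNReal.ofReal (r ^ (2 + α)) < ENNReal.ofReal N := by
    refine lt_of_le_of_lt ?_ hN
    unfold kSemi2
    exact le_iSup_of_le z0 (le_iSup_of_le (Set.mem_univ _) (le_iSup_of_le r (le_iSup_of_le hr
      (le_iSup_of_le (Set.subset_univ _) le_rfl))))
  rw [ENNReal.div_lt_iff (Or.inl (ENNReal.ofReal_pos.2 hr').ne') (Or.inl ENNReal.ofReal_ne_top),
    ← ENNReal.ofReal_mul hN0.le] at h1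
  simp only [iInf_lt_iff] at h1
  obtain ⟨a, b, q, M, h2⟩ := h1
  refine ⟨a, b, q, M, fun z hz => ?_⟩
  have h3 : ENNReal.ofReal |g z - kpoly a b q M z| ≤ ENNReal.ofReal (N * r ^ (2 + α)) :=
    le_trans (le_iSup₂ (f := fun z (_ : z ∈ kCyl r z0) =>
      ENNReal.ofReal |g z - kpoly a b q M z|) z hz) h2.le
  exact (ENNReal.ofReal_le_ofReal_iff (by positivity)).1 h3

lemma kSemi2_le (α : ℝ) (g : Z d → ℝ) (B : ℝ) (hB : 0 ≤ B)
    (h : ∀ (z0 : Z d) (r : ℝ), 0 < r → ∃ (a b : ℝ) (q : Fin d → ℝ) (M : Matrix (Fin d) (Fin d) ℝ),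
      ∀ z ∈ kCyl r z0, |g z - kpoly a b q M z| ≤ B * r ^ (2 + α)) :
    kSemi2 α Set.univ g ≤ ENNReal.ofReal B := by
  unfold kSemi2
  refine iSup_le fun z0 => iSup_le fun _ => iSup_le fun r => iSup_le fun hr => iSup_le fun _ => ?_
  obtain ⟨a, b, q, M, hp⟩ := h z0 r hr
  refine ENNReal.div_le_of_le_mul ?_
  rw [← ENNReal.ofReal_mul hB]
  exact iInf_le_of_le a (iInf_le_of_le b (iInf_le_of_le q (iInf_le_of_le M
    (iSup_le fun z => iSup_le fun hz => ENNReal.ofReal_le_ofReal (hp z hz)))))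

lemma kHolder_extract (α : ℝ) (S : Z d → ℝ) (hS : kHolder α Set.univ S < ⊤) (z0 : Z d) (r : ℝ)
    (hr : 0 < r) (z : Z d) (hz : z ∈ kCyl r z0) :
    |S z - S z0| ≤ (kHolder α Set.univ S).toReal * r ^ α := by
  have hr' : 0 < r ^ α := by positivity
  have h1 : ENNReal.ofReal (|S z - S z0| / r ^ α) ≤ kHolder α Set.univ S := by
    unfold kHolder
    exact le_iSup_of_le z0 (le_iSup_of_le (Set.mem_univ _) (le_iSup_of_le r (le_iSup_of_le hr
      (le_iSup_of_le (Set.subset_univ _) (le_iSup_of_le z (le_iSup_of_le hz le_rfl))))))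
  have h2 := (ENNReal.ofReal_le_iff_le_toReal hS.ne).1 h1
  rwa [div_le_iff₀ hr'] at h2

lemma K1_nonneg : 0 ≤ K1 d := by
  unfold K1; have := CE_nonneg (d := d); positivity

lemma K2_pos : 0 < K2 d := by
  unfold K2; positivity

lemma exists_scale (d : ℕ) (α : ℝ) (hα1 : α < 1) :
    ∃ l : ℝ, 0 < l ∧ l ≤ 1 / (48 * Dd d) ∧ K1 d * l ^ 3 ≤ (1/2) * l ^ (2 + α) := by
  have hD : 0 < Dd d := by unfold Dd; positivity
  have hK := K1_nonneg (d := d)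
  have h1 : Tendsto (fun l : ℝ => K1 d * l ^ (1 - α)) (𝓝[>] 0) (𝓝 0) := by
    have : ContinuousAt (fun l : ℝ => K1 d * l ^ (1 - α)) 0 :=
      continuousAt_const.mul (Real.continuousAt_rpow_const 0 _ (Or.inr (by linarith)))
    have := this.tendsto
    rw [Real.zero_rpow (by linarith), mul_zero] at this
    exact this.mono_left nhdsWithin_le_nhds
  have h2 : ∀ᶠ l : ℝ in 𝓝[>] 0, K1 d * l ^ (1 - α) < 1 / 2 := h1.eventually_lt_const (by norm_num)
  obtain ⟨l, hl, hl0, hl1⟩ := (h2.and (Ioc_mem_nhdsGT (show 0 < 1 / (48 * Dd d) by positivity))).exists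
  refine ⟨l, hl0, hl1, ?_⟩
  have e : l ^ 3 = l ^ (1 - α) * l ^ (2 + α) := by
    rw [← Real.rpow_add hl0, ← Real.rpow_natCast]; congr 1; push_cast; ring
  rw [e, ← mul_assoc]
  have : 0 < l ^ (2 + α) := by positivity
  exact mul_le_mul_of_nonneg_right hl.le this.le

/-- **Schauder estimate for the Kolmogorov equation**: any solution of
`(∂_t + v·∇_x) g = Δ_v g + S` on the whole space with `[g]_{C_ℓ^{2+α}} < ∞` satisfies
`[g]_{C_ℓ^{2+α}} ≤ C [S]_{C_ℓ^α}`, with `C = C(d, α)`. -/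
theorem schauder_estimate_kolmogorov
    (d : ℕ) (hd : 1 ≤ d) (α : ℝ) (hα0 : 0 < α) (hα1 : α < 1) :
    ∃ C : ℝ, 0 < C ∧
      ∀ (S g : Z d → ℝ),
        kHolder α Set.univ S < ⊤ →
        KinReg g Set.univ →
        (∀ z : Z d, Yop g z = (∑ i, pvv g i i z) + S z) →
        kSemi2 α Set.univ g < ⊤ →
        kSemi2 α Set.univ g ≤ ENNReal.ofReal C * kHolder α Set.univ S := by
  obtain ⟨l, hl0, hl1, hl⟩ := exists_scale d α hα1
  have hL0 : 0 < l ^ (2 + α) := by positivity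
  have hK2 := K2_pos (d := d)
  refine ⟨2 * (K2 d / l ^ (2 + α)), by positivity, ?_⟩
  intro S g hS hg heq hfin
  have hcont : Continuous g := by
    have := hg.cont
    rwa [← continuousOn_univ]
  have hL : ∀ z, HasL g z (S z) := by
    intro z
    have := KinReg.hasL hg z
    rw [heq z] at this
    simpa using this
  set N := (kSemi2 α Set.univ g).toReal with hN
  set K := (kHolder α Set.univ S).toReal with hK
  have hNe : kSemi2 α Set.univ g = ENNReal.ofReal N := (ENNReal.ofReal_toReal hfin.ne).symm
  have hKe : kHolder α Set.univ S = ENNReal.ofReal K := (ENNReal.ofReal_toReal hS.ne).symm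
  have hN0 : 0 ≤ N := ENNReal.toReal_nonneg
  have hK0 : 0 ≤ K := ENNReal.toReal_nonneg
  have key : ∀ N', N < N' → N ≤ (1/2) * N' + (K2 d / l ^ (2 + α)) * K := by
    intro N' hN'
    have hN'0 : 0 < N' := by linarith
    have h1 := kSemi2_extract α g N' (by rw [hNe]; exact (ENNReal.ofReal_lt_ofReal_iff hN'0).2 hN')
    have h2 := any_scale α hα0 hα1 g S hcont hL N' K hN'0.le hK0 h1
      (fun z0 r hr z hz => kHolder_extract α S hS z0 r hr z hz) l hl0 hl1
    have hB : 0 ≤ (K1 d * N' * l ^ 3 + K2 d * K) / l ^ (2 + α) := by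
      have := K1_nonneg (d := d)
      positivity
    have h3 := kSemi2_le α g _ hB h2
    rw [hNe, ENNReal.ofReal_le_ofReal_iff hB] at h3
    refine h3.trans ?_
    rw [div_le_iff₀ hL0]
    have e : ((1/2) * N' + K2 d / l ^ (2 + α) * K) * l ^ (2 + α) = N' * ((1/2) * l ^ (2 + α)) + K2 d * K := by
      field_simp
    rw [e]
    have := mul_le_mul_of_nonneg_left hl hN'0.le
    linarith
  have hfinal : N ≤ 2 * (K2 d / l ^ (2 + α)) * K := by
    have : N ≤ (1/2) * N + (K2 d / l ^ (2 + α)) * K := by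
      refine le_of_forall_pos_le_add fun ε hε => ?_
      have := key (N + ε) (by linarith)
      linarith
    linarith
  rw [hNe, hKe, ← ENNReal.ofReal_mul (by positivity)]
  exact ENNReal.ofReal_le_ofReal hfinal
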